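/- arXiv:1708.04073 — 10 statements merged into one kernel-verified Lean document; each statement's English description precedes it below -/
import Mathlib

section
/- (Sawtooth Lemma, Property 1.) For every t ∈ ℕ and every x ≥ 0, (1/4)·∫₀⁴ ∫₀¹ g_t(β·x + α·2^{t+1}) dα dβ = 2^{t−1}; that is, if α is uniform on [0,1] and β is uniform on [0,4], independent, then E_{α,β}[g_{t,α,β}(x)] = 2^{t−1}. -/
open MeasureTheory

/-- The sawtooth function `g_t(x) = 2^t - |x - (⌊x/2^{t+1}⌋·2^{t+1} + 2^t)|`. -/
noncomputable def sawtooth (t : ℕ) (x : ℝ) : ℝ :=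
  2 ^ t - |x - ((⌊x / 2 ^ (t + 1)⌋ : ℝ) * 2 ^ (t + 1) + 2 ^ t)|

lemma saw_periodic (t : ℕ) : Function.Periodic (fun s : ℝ => sawtooth t (s * 2 ^ (t + 1))) 1 := by
  intro s
  have h : (2:ℝ) ^ (t + 1) ≠ 0 := by positivity
  simp only [sawtooth]
  rw [mul_div_cancel_right₀ _ h, mul_div_cancel_right₀ _ h, Int.floor_add_one]
  push_cast
  congr 2
  ring

lemma saw_unit (t : ℕ) (s : ℝ) (h0 : 0 ≤ s) (h1 : s < 1) :
    sawtooth t (s * 2 ^ (t + 1)) = 2 ^ t * (1 - |2 * s - 1|) := by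
  have h : (2:ℝ) ^ (t + 1) ≠ 0 := by positivity
  have hf : ⌊s⌋ = 0 := Int.floor_eq_zero_iff.2 ⟨h0, h1⟩
  simp only [sawtooth]
  rw [mul_div_cancel_right₀ _ h, hf]
  have e : s * 2 ^ (t + 1) - (((0:ℤ):ℝ) * 2 ^ (t + 1) + 2 ^ t) = 2 ^ t * (2 * s - 1) := by
    push_cast
    ring
  rw [e, abs_mul, abs_of_pos (by positivity : (0:ℝ) < 2 ^ t)]
  ring

lemma tent_integral : ∫ s in (0:ℝ)..1, (1 - |2 * s - 1|) = 1 / 2 := by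
  have hc : Continuous (fun s : ℝ => 1 - |2 * s - 1|) := by fun_prop
  rw [← intervalIntegral.integral_add_adjacent_intervals (b := 1 / 2)
    (hc.intervalIntegrable _ _) (hc.intervalIntegrable _ _)]
  have e1 : ∫ s in (0:ℝ)..(1 / 2), (1 - |2 * s - 1|) = ∫ s in (0:ℝ)..(1 / 2), 2 * s := by
    apply intervalIntegral.integral_congr
    intro s hs
    rw [Set.uIcc_of_le (by norm_num)] at hs
    simp only
    rw [abs_of_nonpos (by linarith [hs.2])]
    ring
  have e2 : ∫ s in (1 / 2 : ℝ)..1, (1 - |2 * s - 1|) = ∫ s in (1 / 2 : ℝ)..1, (2 - 2 * s) := by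
    apply intervalIntegral.integral_congr
    intro s hs
    rw [Set.uIcc_of_le (by norm_num)] at hs
    simp only
    rw [abs_of_nonneg (by linarith [hs.1])]
    ring
  rw [e1, e2, intervalIntegral.integral_sub (by simp)
    ((by fun_prop : Continuous (fun s : ℝ => 2 * s)).intervalIntegrable _ _)]
  rw [intervalIntegral.integral_const_mul, intervalIntegral.integral_const_mul, integral_id,
    integral_id, intervalIntegral.integral_const, smul_eq_mul]
  norm_num

lemma saw_inner (t : ℕ) (c : ℝ) :
    ∫ α in (0:ℝ)..1, sawtooth t (c + α * 2 ^ (t + 1)) = 2 ^ t / 2 := by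
  have h : (2:ℝ) ^ (t + 1) ≠ 0 := by positivity
  have e : ∀ α : ℝ, sawtooth t (c + α * 2 ^ (t + 1)) =
      (fun s : ℝ => sawtooth t (s * 2 ^ (t + 1))) (α + c / 2 ^ (t + 1)) := by
    intro α
    simp only
    congr 1
    field_simp
    ring
  simp_rw [e]
  rw [intervalIntegral.integral_comp_add_right (fun s : ℝ => sawtooth t (s * 2 ^ (t + 1))),
    zero_add, add_comm (1:ℝ), (saw_periodic t).intervalIntegral_add_eq _ 0, zero_add]
  have e3 : ∫ s in (0:ℝ)..1, sawtooth t (s * 2 ^ (t + 1)) =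
      ∫ s in (0:ℝ)..1, 2 ^ t * (1 - |2 * s - 1|) := by
    apply intervalIntegral.integral_congr
    intro s hs
    rw [Set.uIcc_of_le zero_le_one] at hs
    rcases hs.2.lt_or_eq with h1 | h1
    · exact saw_unit t s hs.1 h1
    · have h2 := saw_periodic t 0
      have h3 := saw_unit t 0 le_rfl one_pos
      simp only [zero_add] at h2
      subst h1
      simp only
      rw [h2, h3]
      norm_num
  rw [e3, intervalIntegral.integral_const_mul, tent_integral]
  ring

/-- Sawtooth Lemma, Property 1: with `α` uniform on `[0,1]` and `β` uniform on `[0,4]`,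
independent, `E[g_t(β·x + α·2^{t+1})] = 2^{t-1}`. -/
theorem sawtooth_expectation (t : ℕ) (x : ℝ) (hx : 0 ≤ x) :
    (1 / 4) * ∫ β in (0:ℝ)..4, ∫ α in (0:ℝ)..1,
      sawtooth t (β * x + α * 2 ^ (t + 1)) = 2 ^ t / 2 := by
  simp_rw [saw_inner]
  rw [intervalIntegral.integral_const, smul_eq_mul]
  ring
end

section
/- (Sawtooth Lemma, Property 2.) For every t ∈ ℕ and all x, y ≥ 0, (1/4)·∫₀⁴ ∫₀¹ |g_t(β·x + α·2^{t+1}) − g_t(β·y + α·2^{t+1})| dα dβ ≥ (1/6)·min{|x − y|, 2^t}; that is, with α uniform on [0,1] and β uniform on [0,4] independent, E_{α,β}[|g_{t,α,β}(x) − g_{t,α,β}(y)|] ≥ min{|x−y|, 2^t}/6. -/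
open MeasureTheory

noncomputable def sTri (u : ℝ) : ℝ := 1 / 2 - |Int.fract u - 1 / 2|

lemma sawtooth_eq_sTri (t : ℕ) (z : ℝ) :
    sawtooth t z = 2 ^ (t + 1) * sTri (z / 2 ^ (t + 1)) := by
  unfold sawtooth sTri
  have hT : (0:ℝ) < 2 ^ (t + 1) := by positivity
  have h2 : (2:ℝ) ^ t = 2 ^ (t + 1) / 2 := by rw [pow_succ]; ring
  rw [h2]
  generalize (2:ℝ) ^ (t + 1) = T at *
  have : z - ((⌊z / T⌋ : ℝ) * T + T / 2) = T * (Int.fract (z / T) - 1 / 2) := by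
    unfold Int.fract
    field_simp
    ring
  rw [this, abs_mul, abs_of_pos hT]
  ring

lemma sTri_periodic : Function.Periodic sTri 1 := by
  intro u
  simp [sTri]

lemma sTri_measurable : Measurable sTri := by
  unfold sTri
  fun_prop

lemma sTri_nonneg (u : ℝ) : 0 ≤ sTri u := by
  unfold sTri
  have := Int.fract_nonneg u
  have := (Int.fract_lt_one u).le
  have : |Int.fract u - 1 / 2| ≤ 1 / 2 := by rw [abs_le]; constructor <;> linarith
  linarith

lemma sTri_le (u : ℝ) : sTri u ≤ 1 / 2 := by
  unfold sTri
  have := abs_nonneg (Int.fract u - 1 / 2)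
  linarith

lemma sTri_of_le_half {u : ℝ} (h0 : 0 ≤ u) (h1 : u ≤ 1 / 2) : sTri u = u := by
  unfold sTri
  rw [Int.fract_eq_self.2 ⟨h0, by linarith⟩, abs_of_nonpos (by linarith)]
  ring

lemma sTri_of_ge_half {u : ℝ} (h0 : 1 / 2 ≤ u) (h1 : u ≤ 1) : sTri u = 1 - u := by
  rcases h1.lt_or_eq with h | h
  · unfold sTri
    rw [Int.fract_eq_self.2 ⟨by linarith, h⟩, abs_of_nonneg (by linarith)]
    ring
  · subst h; norm_num [sTri]

lemma sTri_of_ge_one {u : ℝ} (h0 : 1 ≤ u) (h1 : u ≤ 3 / 2) : sTri u = u - 1 := by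
  have := sTri_periodic (u - 1)
  rw [sub_add_cancel] at this
  rw [this, sTri_of_le_half (by linarith) (by linarith)]

lemma sTri_diff_integrable (u v a b : ℝ) :
    IntervalIntegrable (fun α => |sTri (α + u) - sTri (α + v)|) volume a b := by
  apply (intervalIntegrable_const (c := (1:ℝ))).mono_fun
  · have := sTri_measurable
    exact Measurable.aestronglyMeasurable (by fun_prop)
  · refine Filter.Eventually.of_forall fun α => ?_
    have h1 := sTri_nonneg (α + u)
    have h2 := sTri_nonneg (α + v)
    have h3 := sTri_le (α + u)
    have h4 := sTri_le (α + v)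
    simp only [Real.norm_eq_abs, abs_abs, abs_one]
    rw [abs_le]; constructor <;> linarith

noncomputable def gapI (d : ℝ) : ℝ := ∫ α in (0:ℝ)..1, |sTri (α + d) - sTri α|

lemma gap_eq_gapI (u v : ℝ) :
    ∫ α in (0:ℝ)..1, |sTri (α + u) - sTri (α + v)| = gapI (u - v) := by
  unfold gapI
  have hp : Function.Periodic (fun α => |sTri (α + (u - v)) - sTri α|) 1 := by
    intro α
    have h1 := sTri_periodic (α + (u - v))
    have h2 := sTri_periodic α
    simp only
    rw [h2, show α + 1 + (u - v) = α + (u - v) + 1 by ring, h1]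
  have := hp.intervalIntegral_add_eq v 0
  rw [zero_add] at this
  rw [← this, add_comm v 1]
  have h := intervalIntegral.integral_comp_add_right (a := 0) (b := 1)
    (fun α => |sTri (α + (u - v)) - sTri α|) v
  rw [zero_add] at h
  rw [← h]
  congr 1
  ext α
  rw [show α + v + (u - v) = α + u by ring]

lemma gapI_neg (d : ℝ) : gapI (-d) = gapI d := by
  have h1 := gap_eq_gapI 0 d
  have h2 := gap_eq_gapI d 0
  rw [zero_sub] at h1
  rw [sub_zero] at h2
  rw [← h1, ← h2]
  congr 1
  ext α
  rw [abs_sub_comm]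

lemma gapI_sub_one (d : ℝ) : gapI (d - 1) = gapI d := by
  unfold gapI
  congr 1
  ext α
  have := sTri_periodic (α + (d - 1))
  rw [← this, show α + (d - 1) + 1 = α + d by ring]

lemma gapI_fract (d : ℝ) : gapI (Int.fract d) = gapI d := by
  unfold gapI
  congr 1
  ext α
  have := sTri_periodic.sub_int_mul_eq (x := α + d) ⌊d⌋
  rw [mul_one] at this
  rw [← this, Int.fract, add_sub_assoc]

lemma lin_int (c m a b : ℝ) :
    ∫ α in a..b, (c + m * α) = c * (b - a) + m * (b ^ 2 - a ^ 2) / 2 := by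
  rw [intervalIntegral.integral_add (by simp) (Continuous.intervalIntegrable (by fun_prop) _ _),
    intervalIntegral.integral_const_mul, integral_id]
  simp
  ring

lemma piece (d c m a b : ℝ) (hab : a ≤ b)
    (h : ∀ α, a ≤ α → α ≤ b → c + m * α ≤ |sTri (α + d) - sTri α|) :
    c * (b - a) + m * (b ^ 2 - a ^ 2) / 2 ≤ ∫ α in a..b, |sTri (α + d) - sTri α| := by
  rw [← lin_int]
  apply intervalIntegral.integral_mono_on hab
  · exact Continuous.intervalIntegrable (by fun_prop) _ _
  · simpa using sTri_diff_integrable d 0 a b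
  · intro α hα
    exact h α hα.1 hα.2

lemma gapI_small (d : ℝ) (h0 : 0 ≤ d) (h1 : d ≤ 1 / 2) : d * (1 - d) ≤ gapI d := by
  have hi : ∀ a b, IntervalIntegrable (fun α => |sTri (α + d) - sTri α|) volume a b := by
    intro a b
    simpa using sTri_diff_integrable d 0 a b
  have p1 := piece d d 0 0 (1 / 2 - d) (by linarith) (by
    intro α ha hb
    rw [sTri_of_le_half (u := α + d) (by linarith) (by linarith),
      sTri_of_le_half (u := α) (by linarith) (by linarith)]
    refine le_trans ?_ (le_abs_self _); linarith)
  have p2 := piece d (1 - d) (-2) (1 / 2 - d) (1 / 2 - d / 2) (by linarith) (by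
    intro α ha hb
    rw [sTri_of_ge_half (u := α + d) (by linarith) (by linarith),
      sTri_of_le_half (u := α) (by linarith) (by linarith)]
    refine le_trans ?_ (le_abs_self _); linarith)
  have p3 := piece d (d - 1) 2 (1 / 2 - d / 2) (1 / 2) (by linarith) (by
    intro α ha hb
    rw [sTri_of_ge_half (u := α + d) (by linarith) (by linarith),
      sTri_of_le_half (u := α) (by linarith) (by linarith)]
    refine le_trans ?_ (neg_le_abs _); linarith)
  have p4 := piece d d 0 (1 / 2) (1 - d) (by linarith) (by
    intro α ha hb
    rw [sTri_of_ge_half (u := α + d) (by linarith) (by linarith),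
      sTri_of_ge_half (u := α) (by linarith) (by linarith)]
    refine le_trans ?_ (neg_le_abs _); linarith)
  have p5 := piece d (2 - d) (-2) (1 - d) (1 - d / 2) (by linarith) (by
    intro α ha hb
    rw [sTri_of_ge_one (u := α + d) (by linarith) (by linarith),
      sTri_of_ge_half (u := α) (by linarith) (by linarith)]
    refine le_trans ?_ (neg_le_abs _); linarith)
  have p6 := piece d (d - 2) 2 (1 - d / 2) 1 (by linarith) (by
    intro α ha hb
    rw [sTri_of_ge_one (u := α + d) (by linarith) (by linarith),
      sTri_of_ge_half (u := α) (by linarith) (by linarith)]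
    refine le_trans ?_ (le_abs_self _); linarith)
  unfold gapI
  rw [← intervalIntegral.integral_add_adjacent_intervals (hi 0 (1 / 2 - d)) (hi _ 1),
    ← intervalIntegral.integral_add_adjacent_intervals (hi _ (1 / 2 - d / 2)) (hi _ 1),
    ← intervalIntegral.integral_add_adjacent_intervals (hi _ (1 / 2)) (hi _ 1),
    ← intervalIntegral.integral_add_adjacent_intervals (hi _ (1 - d)) (hi _ 1),
    ← intervalIntegral.integral_add_adjacent_intervals (hi _ (1 - d / 2)) (hi _ 1)]
  linarith

noncomputable def Fq (d : ℝ) : ℝ := Int.fract d * (1 - Int.fract d)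

lemma Fq_le_gapI (d : ℝ) : Fq d ≤ gapI d := by
  unfold Fq
  rw [← gapI_fract]
  have h0 := Int.fract_nonneg d
  have h1 := (Int.fract_lt_one d).le
  generalize Int.fract d = e at *
  rcases le_total e (1 / 2) with h | h
  · exact gapI_small e h0 h
  · have := gapI_small (1 - e) (by linarith) (by linarith)
    rw [← gapI_sub_one, ← gapI_neg, neg_sub]
    linarith

lemma Fq_nonneg (d : ℝ) : 0 ≤ Fq d :=
  mul_nonneg (Int.fract_nonneg d) (by linarith [Int.fract_lt_one d])

lemma Fq_le_one (d : ℝ) : Fq d ≤ 1 := by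
  unfold Fq
  nlinarith [Int.fract_nonneg d, Int.fract_lt_one d]

lemma Fq_measurable : Measurable Fq := by
  unfold Fq
  fun_prop

lemma Fq_periodic : Function.Periodic Fq 1 := by
  intro u
  simp [Fq]

lemma Fq_integrable (a b : ℝ) : IntervalIntegrable Fq volume a b := by
  apply (intervalIntegrable_const (c := (1:ℝ))).mono_fun
  · exact Fq_measurable.aestronglyMeasurable
  · refine Filter.Eventually.of_forall fun α => ?_
    simp only [Real.norm_eq_abs, abs_one]
    rw [abs_of_nonneg (Fq_nonneg α)]
    exact Fq_le_one α

lemma Fq_int_small (R : ℝ) (h0 : 0 ≤ R) (h1 : R ≤ 1) :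
    ∫ u in (0:ℝ)..R, Fq u = R ^ 2 / 2 - R ^ 3 / 3 := by
  have : ∫ u in (0:ℝ)..R, Fq u = ∫ u in (0:ℝ)..R, (u - u ^ 2) := by
    apply intervalIntegral.integral_congr
    intro u hu
    rw [Set.uIcc_of_le h0] at hu
    rcases (hu.2.trans h1).lt_or_eq with h | h
    · simp only [Fq]
      rw [Int.fract_eq_self.2 ⟨hu.1, h⟩]; ring
    · subst h; simp [Fq]
  rw [this, intervalIntegral.integral_sub (Continuous.intervalIntegrable (by fun_prop) _ _)
    (Continuous.intervalIntegrable (by fun_prop) _ _), integral_id, integral_pow]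
  norm_num

lemma Fq_int_nat (n : ℕ) : ∫ u in (0:ℝ)..n, Fq u = n / 6 := by
  have h1 := Fq_int_small 1 (by norm_num) le_rfl
  induction n with
  | zero => simp
  | succ n ih =>
    rw [← intervalIntegral.integral_add_adjacent_intervals (Fq_integrable 0 n)
      (Fq_integrable n _), ih]
    push_cast
    rw [Fq_periodic.intervalIntegral_add_eq (n:ℝ) 0, zero_add, h1]
    ring

lemma Fq_int_ge (n : ℕ) (R : ℝ) (h : (n:ℝ) ≤ R) : (n:ℝ) / 6 ≤ ∫ u in (0:ℝ)..R, Fq u := by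
  rw [← intervalIntegral.integral_add_adjacent_intervals (Fq_integrable 0 n)
      (Fq_integrable n _), Fq_int_nat]
  have := intervalIntegral.integral_nonneg h (μ := volume) (fun u _ => Fq_nonneg u)
  linarith

lemma outer_bound (r : ℝ) (hr : 0 < r) :
    min r (1 / 2) / 6 ≤ (1 / 4) * ∫ β in (0:ℝ)..4, Fq (β * r) := by
  rw [intervalIntegral.integral_comp_mul_right _ hr.ne', zero_mul, smul_eq_mul,
    ← mul_assoc, ← div_eq_mul_inv, div_mul_eq_mul_div, le_div_iff₀ hr]
  rcases le_total (4 * r) 1 with h1 | h1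
  · rw [Fq_int_small _ (by linarith) h1]
    have : min r (1 / 2) ≤ r := min_le_left _ _
    nlinarith [mul_nonneg (sq_nonneg r) (sub_nonneg.2 h1)]
  · rcases le_total (4 * r) 2 with h2 | h2
    · have := Fq_int_ge 1 (4 * r) (by simpa using h1)
      have h3 : min r (1 / 2) ≤ r := min_le_left _ _
      push_cast at this
      nlinarith
    · have h3 : min r (1 / 2) ≤ 1 / 2 := min_le_right _ _
      have := Fq_int_ge ⌊4 * r⌋₊ (4 * r) (Nat.floor_le (by linarith))
      have h4 := Nat.lt_floor_add_one (4 * r)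
      have h5 : (2:ℝ) ≤ (⌊4 * r⌋₊ : ℝ) := by
        exact_mod_cast Nat.le_floor (by simpa using h2)
      nlinarith

lemma inner_eq (t : ℕ) (x y β : ℝ) :
    (∫ α in (0:ℝ)..1,
        |sawtooth t (β * x + α * 2 ^ (t + 1)) - sawtooth t (β * y + α * 2 ^ (t + 1))|)
      = 2 ^ (t + 1) * gapI (β * ((x - y) / 2 ^ (t + 1))) := by
  have hT : (0:ℝ) < 2 ^ (t + 1) := by positivity
  simp only [sawtooth_eq_sTri]
  generalize (2:ℝ) ^ (t + 1) = T at *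
  rw [show β * ((x - y) / T) = β * x / T - β * y / T by ring, ← gap_eq_gapI,
    ← intervalIntegral.integral_const_mul]
  congr 1
  ext α
  rw [← mul_sub, abs_mul, abs_of_pos hT]
  congr 4 <;> field_simp <;> ring

lemma gapI_measurable : Measurable gapI := by
  have hs := sTri_measurable
  unfold gapI
  simp only [intervalIntegral.integral_of_le zero_le_one]
  apply StronglyMeasurable.measurable
  apply StronglyMeasurable.integral_prod_right
    (f := fun d α => |sTri (α + d) - sTri α|)
  apply Measurable.stronglyMeasurable
  unfold Function.uncurry
  fun_prop

lemma gapI_bound (d : ℝ) : ‖gapI d‖ ≤ 1 := by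
  have := intervalIntegral.norm_integral_le_of_norm_le_const (a := 0) (b := 1) (C := 1)
    (f := fun α => |sTri (α + d) - sTri α|) (by
      intro α _
      have h1 := sTri_nonneg (α + d)
      have h2 := sTri_nonneg α
      have h3 := sTri_le (α + d)
      have h4 := sTri_le α
      simp only [Real.norm_eq_abs, abs_abs]
      rw [abs_le]; constructor <;> linarith)
  simpa [gapI] using this

lemma main_aux (t : ℕ) (x y : ℝ) (hxy : y < x) :
    min |x - y| (2 ^ t) / 6 ≤
      (1 / 4) * ∫ β in (0:ℝ)..4, ∫ α in (0:ℝ)..1,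
        |sawtooth t (β * x + α * 2 ^ (t + 1)) - sawtooth t (β * y + α * 2 ^ (t + 1))| := by
  simp only [inner_eq]
  have hT : (0:ℝ) < 2 ^ (t + 1) := by positivity
  have h2 : (2:ℝ) ^ t = 2 ^ (t + 1) * (1 / 2) := by rw [pow_succ]; ring
  rw [h2, abs_of_pos (sub_pos.2 hxy), intervalIntegral.integral_const_mul]
  generalize (2:ℝ) ^ (t + 1) = T at *
  have hr : 0 < (x - y) / T := div_pos (sub_pos.2 hxy) hT
  have hxr : x - y = T * ((x - y) / T) := by field_simp
  generalize (x - y) / T = r at *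
  rw [hxr, ← mul_min_of_nonneg _ _ hT.le]
  have hm : (∫ β in (0:ℝ)..4, Fq (β * r)) ≤ ∫ β in (0:ℝ)..4, gapI (β * r) := by
    apply intervalIntegral.integral_mono_on (by norm_num)
    · apply (intervalIntegrable_const (c := (1:ℝ))).mono_fun
      · exact (Fq_measurable.comp (measurable_id.mul_const r)).aestronglyMeasurable
      · refine Filter.Eventually.of_forall fun α => ?_
        simp only [Real.norm_eq_abs, abs_one]
        rw [abs_of_nonneg (Fq_nonneg _)]
        exact Fq_le_one _
    · apply (intervalIntegrable_const (c := (1:ℝ))).mono_fun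
      · exact (gapI_measurable.comp (measurable_id.mul_const r)).aestronglyMeasurable
      · refine Filter.Eventually.of_forall fun α => ?_
        rw [norm_one]
        exact gapI_bound _
    · intro β _
      exact Fq_le_gapI _
  have ho := outer_bound r hr
  have : min r (1 / 2) / 6 ≤ (1 / 4) * ∫ β in (0:ℝ)..4, gapI (β * r) := by linarith
  calc T * min r (1 / 2) / 6 = T * (min r (1 / 2) / 6) := by ring
    _ ≤ T * ((1 / 4) * ∫ β in (0:ℝ)..4, gapI (β * r)) := mul_le_mul_of_nonneg_left this hT.le
    _ = _ := by ring

/-- Sawtooth Lemma, Property 2: with `α` uniform on `[0,1]` and `β` uniform on `[0,4]`,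
independent, `E[|g_{t,α,β}(x) - g_{t,α,β}(y)|] ≥ min(|x-y|, 2^t)/6`. -/
theorem sawtooth_expected_gap (t : ℕ) (x y : ℝ) (hx : 0 ≤ x) (hy : 0 ≤ y) :
    min |x - y| (2 ^ t) / 6 ≤
      (1 / 4) * ∫ β in (0:ℝ)..4, ∫ α in (0:ℝ)..1,
        |sawtooth t (β * x + α * 2 ^ (t + 1)) - sawtooth t (β * y + α * 2 ^ (t + 1))| := by
  rcases lt_trichotomy x y with h | h | h
  · have := main_aux t y x h
    rw [abs_sub_comm]
    simpa only [abs_sub_comm] using this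
  · subst h
    simp
  · exact main_aux t x y h
end

section
/- For every t ∈ ℕ and every z ∈ [0, 2^{t+1}], ∫₀¹ |g_t(z + α·2^{t+1}) − g_t(α·2^{t+1})| dα = (2^{t+1} − z)·z / 2^{t+1}. -/
open MeasureTheory

/-- The sawtooth normalised to period one. -/
noncomputable def hsaw (a : ℝ) : ℝ := 1 / 2 - |a - ⌊a⌋ - 1 / 2|

lemma sawtooth_eq (t : ℕ) (a : ℝ) : sawtooth t (a * 2 ^ (t + 1)) = 2 ^ (t + 1) * hsaw a := by
  have hP : (0:ℝ) < 2 ^ (t + 1) := by positivity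
  unfold sawtooth hsaw
  rw [mul_div_assoc, div_self hP.ne', mul_one]
  have : a * 2 ^ (t + 1) - ((⌊a⌋ : ℝ) * 2 ^ (t + 1) + 2 ^ t)
      = 2 ^ (t + 1) * (a - ⌊a⌋ - 1 / 2) := by ring
  rw [this, abs_mul, abs_of_pos hP]
  ring

lemma hsaw_1 {a : ℝ} (h0 : 0 ≤ a) (h1 : a ≤ 1 / 2) : hsaw a = a := by
  have : ⌊a⌋ = 0 := Int.floor_eq_iff.2 ⟨by simpa using h0, by norm_num; linarith⟩
  unfold hsaw
  rw [this, abs_of_nonpos] <;> norm_num <;> linarith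

lemma hsaw_2 {a : ℝ} (h0 : 1 / 2 ≤ a) (h1 : a < 1) : hsaw a = 1 - a := by
  have : ⌊a⌋ = 0 := Int.floor_eq_iff.2 ⟨by norm_num; linarith, by norm_num; linarith⟩
  unfold hsaw
  rw [this, abs_of_nonneg] <;> norm_num <;> linarith

lemma hsaw_3 {a : ℝ} (h0 : 1 ≤ a) (h1 : a ≤ 3 / 2) : hsaw a = a - 1 := by
  have : ⌊a⌋ = 1 := Int.floor_eq_iff.2 ⟨by norm_num; linarith, by norm_num; linarith⟩
  unfold hsaw
  rw [this, abs_of_nonpos] <;> norm_num <;> linarith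

lemma hsaw_4 {a : ℝ} (h0 : 3 / 2 ≤ a) (h1 : a < 2) : hsaw a = 2 - a := by
  have : ⌊a⌋ = 1 := Int.floor_eq_iff.2 ⟨by norm_num; linarith, by norm_num; linarith⟩
  unfold hsaw
  rw [this, abs_of_nonneg] <;> norm_num <;> linarith

lemma piece_s3 (f : ℝ → ℝ) (u v c d : ℝ) (huv : u ≤ v)
    (h : ∀ a, u < a → a < v → f a = c + d * a) :
    IntervalIntegrable f volume u v ∧ ∫ a in u..v, f a = (v - u) * (c + d * (u + v) / 2) := by
  have hI : IntervalIntegrable (fun a : ℝ => c + d * a) volume u v :=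
    Continuous.intervalIntegrable (by fun_prop) _ _
  have hE : Set.EqOn (fun a : ℝ => c + d * a) f (Set.uIoo u v) := by
    intro a ha
    rw [Set.uIoo_of_le huv] at ha
    exact (h a ha.1 ha.2).symm
  refine ⟨hI.congr_uIoo hE, ?_⟩
  rw [← intervalIntegral.integral_congr_uIoo hE, intervalIntegral.integral_add (by simp)
    (Continuous.intervalIntegrable (by fun_prop) _ _), intervalIntegral.integral_const_mul]
  simp only [intervalIntegral.integral_const, integral_id, smul_eq_mul]
  ring

lemma glue (f : ℝ → ℝ) {u v w x y : ℝ}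
    (h1 : IntervalIntegrable f volume u v ∧ ∫ a in u..v, f a = x)
    (h2 : IntervalIntegrable f volume v w ∧ ∫ a in v..w, f a = y) :
    IntervalIntegrable f volume u w ∧ ∫ a in u..w, f a = x + y :=
  ⟨h1.1.trans h2.1, by
    rw [← intervalIntegral.integral_add_adjacent_intervals h1.1 h2.1, h1.2, h2.2]⟩

lemma hsaw_integral (w : ℝ) (h0 : 0 ≤ w) (h1 : w ≤ 1) :
    ∫ a in (0:ℝ)..1, |hsaw (w + a) - hsaw a| = w * (1 - w) := by
  set f : ℝ → ℝ := fun a => |hsaw (w + a) - hsaw a| with hf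
  rcases le_total w (1 / 2) with hw | hw
  · have p1 := piece_s3 f 0 (1/2 - w) w 0 (by linarith) (fun a ha hb => by
      simp only [hf]
      rw [hsaw_1 (a := w + a) (by linarith) (by linarith), hsaw_1 (a := a) (by linarith)
        (by linarith), abs_of_nonneg] <;> linarith)
    have p2 := piece_s3 f (1/2 - w) (1/2 - w/2) (1 - w) (-2) (by linarith) (fun a ha hb => by
      simp only [hf]
      rw [hsaw_2 (a := w + a) (by linarith) (by linarith), hsaw_1 (a := a) (by linarith)
        (by linarith), abs_of_nonneg] <;> linarith)
    have p3 := piece_s3 f (1/2 - w/2) (1/2) (w - 1) 2 (by linarith) (fun a ha hb => by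
      simp only [hf]
      rw [hsaw_2 (a := w + a) (by linarith) (by linarith), hsaw_1 (a := a) (by linarith)
        (by linarith), abs_of_nonpos] <;> linarith)
    have p4 := piece_s3 f (1/2) (1 - w) w 0 (by linarith) (fun a ha hb => by
      simp only [hf]
      rw [hsaw_2 (a := w + a) (by linarith) (by linarith), hsaw_2 (a := a) (by linarith)
        (by linarith), abs_of_nonpos] <;> linarith)
    have p5 := piece_s3 f (1 - w) (1 - w/2) (2 - w) (-2) (by linarith) (fun a ha hb => by
      simp only [hf]
      rw [hsaw_3 (a := w + a) (by linarith) (by linarith), hsaw_2 (a := a) (by linarith)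
        (by linarith), abs_of_nonpos] <;> linarith)
    have p6 := piece_s3 f (1 - w/2) 1 (w - 2) 2 (by linarith) (fun a ha hb => by
      simp only [hf]
      rw [hsaw_3 (a := w + a) (by linarith) (by linarith), hsaw_2 (a := a) (by linarith)
        (by linarith), abs_of_nonneg] <;> linarith)
    rw [(glue f p1 (glue f p2 (glue f p3 (glue f p4 (glue f p5 p6))))).2]
    ring
  · have p1 := piece_s3 f 0 (1/2 - w/2) (1 - w) (-2) (by linarith) (fun a ha hb => by
      simp only [hf]
      rw [hsaw_2 (a := w + a) (by linarith) (by linarith), hsaw_1 (a := a) (by linarith)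
        (by linarith), abs_of_nonneg] <;> linarith)
    have p2 := piece_s3 f (1/2 - w/2) (1 - w) (w - 1) 2 (by linarith) (fun a ha hb => by
      simp only [hf]
      rw [hsaw_2 (a := w + a) (by linarith) (by linarith), hsaw_1 (a := a) (by linarith)
        (by linarith), abs_of_nonpos] <;> linarith)
    have p3 := piece_s3 f (1 - w) (1/2) (1 - w) 0 (by linarith) (fun a ha hb => by
      simp only [hf]
      rw [hsaw_3 (a := w + a) (by linarith) (by linarith), hsaw_1 (a := a) (by linarith)
        (by linarith), abs_of_nonpos] <;> linarith)
    have p4 := piece_s3 f (1/2) (1 - w/2) (2 - w) (-2) (by linarith) (fun a ha hb => by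
      simp only [hf]
      rw [hsaw_3 (a := w + a) (by linarith) (by linarith), hsaw_2 (a := a) (by linarith)
        (by linarith), abs_of_nonpos] <;> linarith)
    have p5 := piece_s3 f (1 - w/2) (3/2 - w) (w - 2) 2 (by linarith) (fun a ha hb => by
      simp only [hf]
      rw [hsaw_3 (a := w + a) (by linarith) (by linarith), hsaw_2 (a := a) (by linarith)
        (by linarith), abs_of_nonneg] <;> linarith)
    have p6 := piece_s3 f (3/2 - w) 1 (1 - w) 0 (by linarith) (fun a ha hb => by
      simp only [hf]
      rw [hsaw_4 (a := w + a) (by linarith) (by linarith), hsaw_2 (a := a) (by linarith)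
        (by linarith), abs_of_nonneg] <;> linarith)
    rw [(glue f p1 (glue f p2 (glue f p3 (glue f p4 (glue f p5 p6))))).2]
    ring

/-- For `z ∈ [0, 2^{t+1}]`,
`∫₀¹ |g_t(z + α·2^{t+1}) - g_t(α·2^{t+1})| dα = (2^{t+1} - z)·z / 2^{t+1}`. -/
theorem sawtooth_shift_integral (t : ℕ) (z : ℝ) (hz : z ∈ Set.Icc (0:ℝ) (2 ^ (t + 1))) :
    ∫ α in (0:ℝ)..1, |sawtooth t (z + α * 2 ^ (t + 1)) - sawtooth t (α * 2 ^ (t + 1))|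
      = (2 ^ (t + 1) - z) * z / 2 ^ (t + 1) := by
  have hP : (0:ℝ) < 2 ^ (t + 1) := by positivity
  have key : ∀ α : ℝ, |sawtooth t (z + α * 2 ^ (t + 1)) - sawtooth t (α * 2 ^ (t + 1))|
      = 2 ^ (t + 1) * |hsaw (z / 2 ^ (t + 1) + α) - hsaw α| := by
    intro α
    have e : z + α * 2 ^ (t + 1) = (z / 2 ^ (t + 1) + α) * 2 ^ (t + 1) := by
      rw [add_mul, div_mul_cancel₀ _ hP.ne']
    rw [e, sawtooth_eq, sawtooth_eq, ← mul_sub, abs_mul, abs_of_pos hP]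
  simp only [key]
  rw [intervalIntegral.integral_const_mul, hsaw_integral _ (div_nonneg hz.1 hP.le)
    ((div_le_one hP).2 hz.2)]
  generalize (2:ℝ) ^ (t + 1) = P at *
  field_simp
end

section
/- For every t ∈ ℕ and every w ≥ 0, ∫₀¹ |g_t(w + α·2^{t+1}) − g_t(α·2^{t+1})| dα = (2^{t+1} − w')·w' / 2^{t+1}, where w' = w − 2^{t+1}·⌊w / 2^{t+1}⌋ is the residue of w modulo 2^{t+1}. -/
open MeasureTheory

lemma saw_eq (t : ℕ) (x : ℝ) (n : ℤ) (h0 : n * 2 ^ (t + 1) ≤ x) (h1 : x ≤ (n + 1) * 2 ^ (t + 1)) :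
    sawtooth t x = 2 ^ t - |x - (n * 2 ^ (t + 1) + 2 ^ t)| := by
  have hP : (0:ℝ) < 2 ^ (t + 1) := by positivity
  have hp : (0:ℝ) < 2 ^ t := by positivity
  unfold sawtooth
  rcases h1.lt_or_eq with h | h
  · have : ⌊x / 2 ^ (t + 1)⌋ = n := by
      rw [Int.floor_eq_iff]
      exact ⟨by rwa [le_div_iff₀ hP], by rwa [div_lt_iff₀ hP]⟩
    rw [this]
  · have : ⌊x / 2 ^ (t + 1)⌋ = n + 1 := by
      rw [h, mul_div_assoc, div_self hP.ne', mul_one]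
      exact_mod_cast Int.floor_intCast (R := ℝ) (n + 1)
    rw [this, h]
    push_cast
    rw [show ((n:ℝ) + 1) * 2 ^ (t + 1) - ((n + 1) * 2 ^ (t + 1) + 2 ^ t) = -(2 ^ t) by ring,
      show ((n:ℝ) + 1) * 2 ^ (t + 1) - (n * 2 ^ (t + 1) + 2 ^ t) = 2 ^ t by rw [pow_succ]; ring,
      abs_neg]

lemma piece_const (f : ℝ → ℝ) (a b c : ℝ) (hab : a ≤ b) (h : ∀ x, a ≤ x → x ≤ b → f x = c) :
    IntervalIntegrable f volume a b ∧ ∫ x in a..b, f x = c * (b - a) := by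
  have hE : Set.EqOn f (fun _ => c) (Set.uIcc a b) := by
    intro x hx
    rw [Set.uIcc_of_le hab] at hx
    exact h x hx.1 hx.2
  constructor
  · exact (intervalIntegrable_const (c := c)).congr
      (fun x hx => (hE (Set.uIoc_subset_uIcc hx)).symm)
  · rw [intervalIntegral.integral_congr hE]; simp [mul_comm]

lemma piece_abs (f : ℝ → ℝ) (P a b : ℝ) (hab : a ≤ b)
    (h : ∀ x, a ≤ x → x ≤ b → f x = P * |2 * x - (a + b)|) :
    IntervalIntegrable f volume a b ∧ ∫ x in a..b, f x = P * ((b - a) ^ 2 / 2) := by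
  have hE : Set.EqOn f (fun x => P * |2 * x - (a + b)|) (Set.uIcc a b) := by
    intro x hx
    rw [Set.uIcc_of_le hab] at hx
    exact h x hx.1 hx.2
  have hc : Continuous (fun x : ℝ => P * |2 * x - (a + b)|) := by fun_prop
  constructor
  · exact (hc.intervalIntegrable a b).congr
      (fun x hx => (hE (Set.uIoc_subset_uIcc hx)).symm)
  · rw [intervalIntegral.integral_congr hE,
      ← intervalIntegral.integral_add_adjacent_intervals (b := (a + b) / 2)
        (hc.intervalIntegrable _ _) (hc.intervalIntegrable _ _)]
    have h1 : Set.EqOn (fun x => P * |2 * x - (a + b)|) (fun x => P * (a + b) - 2 * P * x)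
        (Set.uIcc a ((a + b) / 2)) := by
      intro x hx
      rw [Set.uIcc_of_le (by linarith)] at hx
      simp only
      rw [abs_of_nonpos (by linarith [hx.2])]; ring
    have h2 : Set.EqOn (fun x => P * |2 * x - (a + b)|) (fun x => 2 * P * x - P * (a + b))
        (Set.uIcc ((a + b) / 2) b) := by
      intro x hx
      rw [Set.uIcc_of_le (by linarith)] at hx
      simp only
      rw [abs_of_nonneg (by linarith [hx.1])]; ring
    rw [intervalIntegral.integral_congr h1, intervalIntegral.integral_congr h2,
      intervalIntegral.integral_sub (Continuous.intervalIntegrable (by fun_prop) _ _)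
        (Continuous.intervalIntegrable (by fun_prop) _ _),
      intervalIntegral.integral_sub (Continuous.intervalIntegrable (by fun_prop) _ _)
        (Continuous.intervalIntegrable (by fun_prop) _ _)]
    have h3 : ∀ c d : ℝ, ∫ x in c..d, 2 * P * x = 2 * P * ((d ^ 2 - c ^ 2) / 2) := by
      intro c d
      rw [intervalIntegral.integral_const_mul, integral_id]
    rw [h3, h3]
    simp only [intervalIntegral.integral_const, smul_eq_mul]
    ring

lemma glue4 (f : ℝ → ℝ) (a b c d e A B C D : ℝ)
    (h1 : IntervalIntegrable f volume a b ∧ ∫ x in a..b, f x = A)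
    (h2 : IntervalIntegrable f volume b c ∧ ∫ x in b..c, f x = B)
    (h3 : IntervalIntegrable f volume c d ∧ ∫ x in c..d, f x = C)
    (h4 : IntervalIntegrable f volume d e ∧ ∫ x in d..e, f x = D) :
    ∫ x in a..e, f x = A + B + C + D := by
  rw [← intervalIntegral.integral_add_adjacent_intervals ((h1.1.trans h2.1).trans h3.1) h4.1,
    ← intervalIntegral.integral_add_adjacent_intervals (h1.1.trans h2.1) h3.1,
    ← intervalIntegral.integral_add_adjacent_intervals h1.1 h2.1, h1.2, h2.2, h3.2, h4.2]

lemma saw_scaled (t : ℕ) (x : ℝ) (n : ℤ) (h0 : (n:ℝ) ≤ x) (h1 : x ≤ n + 1) :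
    sawtooth t (x * 2 ^ (t + 1)) = 2 ^ (t + 1) * (1 / 2 - |x - n - 1 / 2|) := by
  have hP : (0:ℝ) < 2 ^ (t + 1) := by positivity
  rw [saw_eq t _ n (mul_le_mul_of_nonneg_right h0 hP.le)
    (mul_le_mul_of_nonneg_right h1 hP.le), mul_sub]
  have h2 : (2:ℝ) ^ (t + 1) * |x - n - 1 / 2| = |2 ^ (t + 1) * (x - n - 1 / 2)| := by
    rw [abs_mul, abs_of_pos hP]
  rw [h2]
  congr 1
  · rw [pow_succ]; ring
  · congr 1; rw [pow_succ]; ring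

theorem sawtooth_shift_integral_mod (t : ℕ) (w : ℝ) (hw : 0 ≤ w) :
    ∫ α in (0:ℝ)..1, |sawtooth t (w + α * 2 ^ (t + 1)) - sawtooth t (α * 2 ^ (t + 1))|
      = (2 ^ (t + 1) - (w - 2 ^ (t + 1) * (⌊w / 2 ^ (t + 1)⌋ : ℝ)))
          * (w - 2 ^ (t + 1) * (⌊w / 2 ^ (t + 1)⌋ : ℝ)) / 2 ^ (t + 1) := by
  have hP : (0:ℝ) < 2 ^ (t + 1) := by positivity
  obtain ⟨u, hu⟩ : ∃ u, u = Int.fract (w / 2 ^ (t + 1)) := ⟨_, rfl⟩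
  have hu0 : 0 ≤ u := hu ▸ Int.fract_nonneg _
  have hu1 : u < 1 := hu ▸ Int.fract_lt_one _
  obtain ⟨n, hn⟩ : ∃ n, n = ⌊w / 2 ^ (t + 1)⌋ := ⟨_, rfl⟩
  have hwu : w = (n + u) * 2 ^ (t + 1) := by
    rw [hn, hu, Int.floor_add_fract, div_mul_cancel₀ _ hP.ne']
  rw [← hn]
  have e1 : ∀ α : ℝ, w + α * 2 ^ (t + 1) = (n + u + α) * 2 ^ (t + 1) := by
    intro α; rw [hwu]; ring
  simp only [e1]
  have hR : (2 ^ (t + 1) - (w - 2 ^ (t + 1) * (n : ℝ))) * (w - 2 ^ (t + 1) * (n : ℝ)) / 2 ^ (t + 1)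
      = 2 ^ (t + 1) * ((1 - u) * u) := by
    rw [hwu]; field_simp; ring
  rw [hR]
  clear hR e1 hwu hn hu hw
  have k0 : ∀ α : ℝ, 0 ≤ α → α ≤ 1 → sawtooth t (α * 2 ^ (t + 1))
      = 2 ^ (t + 1) * (1 / 2 - |α - 1 / 2|) := by
    intro α h0 h1
    rw [saw_scaled t α 0 (by simpa using h0) (by simpa using h1)]; simp
  have k1 : ∀ α : ℝ, 0 ≤ α → α ≤ 1 - u → sawtooth t ((n + u + α) * 2 ^ (t + 1))
      = 2 ^ (t + 1) * (1 / 2 - |u + α - 1 / 2|) := by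
    intro α h0 h1
    rw [saw_scaled t _ n (by linarith) (by linarith)]
    congr 4; ring
  have k2 : ∀ α : ℝ, 1 - u ≤ α → α ≤ 1 → sawtooth t ((n + u + α) * 2 ^ (t + 1))
      = 2 ^ (t + 1) * (1 / 2 - |u + α - 3 / 2|) := by
    intro α h0 h1
    rw [saw_scaled t _ (n + 1) (by push_cast; linarith) (by push_cast; linarith)]
    push_cast
    rw [show (n:ℝ) + u + α - (n + 1) - 1 / 2 = u + α - 3 / 2 by ring]
  generalize (2:ℝ) ^ (t + 1) = P at *
  have key : ∀ x y z : ℝ, |x - y| = z → |P * x - P * y| = P * z := by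
    intro x y z h
    rw [← mul_sub, abs_mul, abs_of_pos hP, h]
  rcases le_total u (1 / 2) with hh | hh
  · rw [glue4 _ 0 (1 / 2 - u) (1 / 2) (1 - u) 1 _ _ _ _
      (piece_const _ _ _ (P * u) (by linarith) ?_)
      (piece_abs _ P _ _ (by linarith) ?_)
      (piece_const _ _ _ (P * u) (by linarith) ?_)
      (piece_abs _ P _ _ (by linarith) ?_)]
    · ring
    · intro x h0 h1
      rw [k0 x (by linarith) (by linarith), k1 x (by linarith) (by linarith)]
      apply key; clear key k0 k1 k2; grind
    · intro x h0 h1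
      rw [k0 x (by linarith) (by linarith), k1 x (by linarith) (by linarith)]
      apply key; clear key k0 k1 k2; grind
    · intro x h0 h1
      rw [k0 x (by linarith) (by linarith), k1 x (by linarith) (by linarith)]
      apply key; clear key k0 k1 k2; grind
    · intro x h0 h1
      rw [k0 x (by linarith) (by linarith), k2 x (by linarith) (by linarith)]
      apply key; clear key k0 k1 k2; grind
  · rw [glue4 _ 0 (1 - u) (1 / 2) (3 / 2 - u) 1 _ _ _ _
      (piece_abs _ P _ _ (by linarith) ?_)
      (piece_const _ _ _ (P * (1 - u)) (by linarith) ?_)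
      (piece_abs _ P _ _ (by linarith) ?_)
      (piece_const _ _ _ (P * (1 - u)) (by linarith) ?_)]
    · ring
    · intro x h0 h1
      rw [k0 x (by linarith) (by linarith), k1 x (by linarith) (by linarith)]
      apply key; clear key k0 k1 k2; grind
    · intro x h0 h1
      rw [k0 x (by linarith) (by linarith), k2 x (by linarith) (by linarith)]
      apply key; clear key k0 k1 k2; grind
    · intro x h0 h1
      rw [k0 x (by linarith) (by linarith), k2 x (by linarith) (by linarith)]
      apply key; clear key k0 k1 k2; grind
    · intro x h0 h1
      rw [k0 x (by linarith) (by linarith), k2 x (by linarith) (by linarith)]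
      apply key; clear key k0 k1 k2; grind
end

section
/- (Sawtooth Lemma, small-gap case.) For every t ∈ ℕ and all x, y ≥ 0 with |x − y| ≤ 2^{t−1}, (1/4)·∫₀⁴ ∫₀¹ |g_t(β·x + α·2^{t+1}) − g_t(β·y + α·2^{t+1})| dα dβ ≥ (2/3)·|x − y|. -/
open MeasureTheory

/-- normalized sawtooth of period 1 -/
noncomputable def nsaw (v : ℝ) : ℝ := 1 / 2 - |Int.fract v - 1 / 2|

lemma sawtooth_eq_nsaw (t : ℕ) (v : ℝ) :
    sawtooth t (v * 2 ^ (t + 1)) = 2 ^ (t + 1) * nsaw v := by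
  have hP : (0:ℝ) < 2 ^ (t + 1) := by positivity
  unfold sawtooth nsaw
  rw [mul_div_assoc, div_self hP.ne', mul_one, mul_sub, Int.fract]
  have : v * 2 ^ (t + 1) - ((⌊v⌋ : ℝ) * 2 ^ (t + 1) + 2 ^ t)
      = 2 ^ (t + 1) * (v - ⌊v⌋ - 1 / 2) := by ring
  rw [this, abs_mul, abs_of_pos hP]
  ring

lemma nsaw_of_mem {v : ℝ} (h0 : 0 ≤ v) (h1 : v ≤ 1) : nsaw v = 1 / 2 - |v - 1 / 2| := by
  unfold nsaw
  rcases h1.lt_or_eq with h | h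
  · rw [Int.fract_eq_self.2 ⟨h0, h⟩]
  · subst h; norm_num [abs_of_pos, abs_of_neg]

lemma nsaw_add_one (v : ℝ) : nsaw (v + 1) = nsaw v := by
  unfold nsaw; rw [Int.fract_add_one]

lemma nsaw_of_mem' {v : ℝ} (h0 : -(1 / 2) ≤ v) (h1 : v ≤ 1 / 2) : nsaw v = |v| := by
  rcases le_total 0 v with h | h
  · rw [nsaw_of_mem h (by linarith), abs_of_nonneg h, abs_of_nonpos (by linarith)]; ring
  · rw [← nsaw_add_one, nsaw_of_mem (by linarith) (by linarith), abs_of_nonpos h,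
      abs_of_nonneg (by linarith)]; ring

lemma nsaw_neg (v : ℝ) : nsaw (-v) = nsaw v := by
  unfold nsaw
  by_cases h : Int.fract v = 0
  · rw [h, Int.fract_neg_eq_zero.2 h]
  · rw [Int.fract_neg h, abs_sub_comm]; congr 2; ring

lemma nsaw_diff_nonneg {u r : ℝ} (hu : 0 ≤ u) (hu' : u ≤ 1 / 2) (hr : 0 ≤ r) (hr' : r ≤ 1 / 2) :
    |nsaw (u + r) - nsaw (u - r)| = 1 / 2 - |u - (1 / 2 - r)| - |u - r| := by
  rw [nsaw_of_mem (by linarith) (by linarith), nsaw_of_mem' (by linarith) (by linarith)]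
  have : u + r - 1 / 2 = u - (1 / 2 - r) := by ring
  rw [this, abs_of_nonneg]
  rcases abs_cases (u - (1 / 2 - r)) with h | h <;> rcases abs_cases (u - r) with h' | h' <;>
    linarith

lemma nsaw_diff {u r : ℝ} (hu : -(1 / 2) ≤ u) (hu' : u ≤ 1 / 2) (hr : 0 ≤ r) (hr' : r ≤ 1 / 2) :
    |nsaw (u + r) - nsaw (u - r)| = 1 / 2 - |(|u|) - (1 / 2 - r)| - |(|u|) - r| := by
  rcases le_total 0 u with h | h
  · rw [abs_of_nonneg h, nsaw_diff_nonneg h hu' hr hr']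
  · rw [abs_of_nonpos h, ← nsaw_diff_nonneg (by linarith) (by linarith) hr hr',
      ← nsaw_neg (u + r), ← nsaw_neg (u - r), abs_sub_comm]
    congr 3 <;> ring

lemma integral_abs_sub_half {c : ℝ} (hc : 0 ≤ c) (hc' : c ≤ 1 / 2) :
    ∫ u in (0:ℝ)..(1 / 2), |u - c| = (c ^ 2 + (1 / 2 - c) ^ 2) / 2 := by
  have hcont : Continuous fun u : ℝ => |u - c| := by fun_prop
  rw [← intervalIntegral.integral_add_adjacent_intervals (b := c)
    (hcont.intervalIntegrable _ _) (hcont.intervalIntegrable _ _)]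
  have h1 : ∫ u in (0:ℝ)..c, |u - c| = ∫ u in (0:ℝ)..c, (c - u) := by
    apply intervalIntegral.integral_congr
    intro u hu
    rw [Set.uIcc_of_le hc] at hu
    simp only
    rw [abs_of_nonpos (by linarith [hu.2])]; ring
  have h2 : ∫ u in c..(1 / 2), |u - c| = ∫ u in c..(1 / 2), (u - c) := by
    apply intervalIntegral.integral_congr
    intro u hu
    rw [Set.uIcc_of_le hc'] at hu
    simp only
    rw [abs_of_nonneg (by linarith [hu.1])]
  rw [h1, h2, intervalIntegral.integral_sub (by simp) (by simp),
    intervalIntegral.integral_sub (by simp) (by simp)]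
  simp only [integral_id, intervalIntegral.integral_const, smul_eq_mul]
  ring

lemma integral_G {r : ℝ} (hr : 0 ≤ r) (hr' : r ≤ 1 / 2) :
    ∫ u in (0:ℝ)..(1 / 2), (1 / 2 - |u - (1 / 2 - r)| - |u - r|) = r - 2 * r ^ 2 := by
  rw [intervalIntegral.integral_sub (Continuous.intervalIntegrable (by fun_prop) _ _)
      (Continuous.intervalIntegrable (by fun_prop) _ _),
    intervalIntegral.integral_sub (Continuous.intervalIntegrable (by fun_prop) _ _)
      (Continuous.intervalIntegrable (by fun_prop) _ _),
    integral_abs_sub_half hr hr', integral_abs_sub_half (by linarith) (by linarith)]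
  simp only [intervalIntegral.integral_const, smul_eq_mul]
  ring

lemma integral_centered {r : ℝ} (hr : 0 ≤ r) (hr' : r ≤ 1 / 2) :
    ∫ u in (-(1 / 2) : ℝ)..(1 / 2), |nsaw (u + r) - nsaw (u - r)| = 2 * r - 4 * r ^ 2 := by
  have e : ∫ u in (-(1 / 2) : ℝ)..(1 / 2), |nsaw (u + r) - nsaw (u - r)|
      = ∫ u in (-(1 / 2) : ℝ)..(1 / 2), (1 / 2 - |(|u|) - (1 / 2 - r)| - |(|u|) - r|) := by
    apply intervalIntegral.integral_congr
    intro u hu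
    rw [Set.uIcc_of_le (by norm_num)] at hu
    exact nsaw_diff hu.1 hu.2 hr hr'
  have hpos : ∫ u in (0 : ℝ)..(1 / 2), (1 / 2 - |(|u|) - (1 / 2 - r)| - |(|u|) - r|)
      = r - 2 * r ^ 2 := by
    rw [← integral_G hr hr']
    apply intervalIntegral.integral_congr
    intro u hu
    rw [Set.uIcc_of_le (by norm_num)] at hu
    simp only [abs_of_nonneg hu.1]
  have hneg : ∫ u in (-(1 / 2) : ℝ)..0, (1 / 2 - |(|u|) - (1 / 2 - r)| - |(|u|) - r|)
      = r - 2 * r ^ 2 := by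
    have := intervalIntegral.integral_comp_neg (a := (0:ℝ)) (b := 1 / 2)
      (fun u : ℝ => (1 / 2 - |(|u|) - (1 / 2 - r)| - |(|u|) - r|))
    simp only [abs_neg, neg_zero] at this
    rw [← this, hpos]
  rw [e, ← intervalIntegral.integral_add_adjacent_intervals (b := (0:ℝ))
    (Continuous.intervalIntegrable (by fun_prop) _ _)
    (Continuous.intervalIntegrable (by fun_prop) _ _), hpos, hneg]
  ring

lemma integral_shift {a b : ℝ} (h : b ≤ a) (h' : a - b ≤ 1) :
    ∫ α in (0:ℝ)..1, |nsaw (a + α) - nsaw (b + α)| = (a - b) * (1 - (a - b)) := by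
  have hp : Function.Periodic
      (fun u => |nsaw (u + (a - b) / 2) - nsaw (u - (a - b) / 2)|) (1:ℝ) := by
    intro u
    simp only
    rw [show u + 1 + (a - b) / 2 = (u + (a - b) / 2) + 1 by ring,
      show u + 1 - (a - b) / 2 = (u - (a - b) / 2) + 1 by ring, nsaw_add_one, nsaw_add_one]
  have h1 := hp.intervalIntegral_add_eq ((a + b) / 2) (-(1 / 2))
  rw [show (-(1 / 2) + 1 : ℝ) = 1 / 2 by norm_num,
    integral_centered (by linarith) (by linarith)] at h1
  have h2 := intervalIntegral.integral_comp_add_right (a := (0:ℝ)) (b := 1)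
    (fun u => |nsaw (u + (a - b) / 2) - nsaw (u - (a - b) / 2)|) ((a + b) / 2)
  rw [zero_add, add_comm (1:ℝ), h1] at h2
  rw [show (a - b) * (1 - (a - b)) = 2 * ((a - b) / 2) - 4 * ((a - b) / 2) ^ 2 by ring, ← h2]
  congr 1
  ext α
  congr 3 <;> ring

lemma sawtooth_gap_aux (t : ℕ) (x y : ℝ) (h : y ≤ x) (hxy : x - y ≤ 2 ^ t / 2) :
    (2 / 3) * (x - y) ≤
      (1 / 4) * ∫ β in (0:ℝ)..4, ∫ α in (0:ℝ)..1,
        |sawtooth t (β * x + α * 2 ^ (t + 1)) - sawtooth t (β * y + α * 2 ^ (t + 1))| := by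
  have hT : (0:ℝ) < 2 ^ t := by positivity
  have hP : (2:ℝ) ^ (t + 1) = 2 * 2 ^ t := by ring
  have hP0 : (0:ℝ) < 2 ^ (t + 1) := by positivity
  have e : ∫ β in (0:ℝ)..4, ∫ α in (0:ℝ)..1,
        |sawtooth t (β * x + α * 2 ^ (t + 1)) - sawtooth t (β * y + α * 2 ^ (t + 1))|
      = ∫ β in (0:ℝ)..4, ((x - y) * β - (x - y) ^ 2 / 2 ^ (t + 1) * β ^ 2) := by
    apply intervalIntegral.integral_congr
    intro β hβ
    rw [Set.uIcc_of_le (by norm_num)] at hβ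
    simp only
    have e1 : ∀ z α : ℝ, sawtooth t (β * z + α * 2 ^ (t + 1))
        = 2 ^ (t + 1) * nsaw (β * z / 2 ^ (t + 1) + α) := by
      intro z α
      rw [← sawtooth_eq_nsaw]
      congr 1
      field_simp
    have e2 : β * x / 2 ^ (t + 1) - β * y / 2 ^ (t + 1) = β * (x - y) / 2 ^ (t + 1) := by ring
    simp_rw [e1, ← mul_sub, abs_mul, abs_of_pos hP0]
    rw [intervalIntegral.integral_const_mul, integral_shift, e2]
    · field_simp
    · have := mul_le_mul_of_nonneg_left h hβ.1
      gcongr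
    · rw [e2, div_le_one hP0, hP]
      have := mul_le_mul hβ.2 hxy (by linarith) (by norm_num)
      linarith
  rw [e, intervalIntegral.integral_sub (Continuous.intervalIntegrable (by fun_prop) _ _)
      (Continuous.intervalIntegrable (by fun_prop) _ _),
    intervalIntegral.integral_const_mul, intervalIntegral.integral_const_mul, integral_id,
    integral_pow]
  have key : (x - y) ^ 2 / 2 ^ (t + 1) ≤ (x - y) / 4 := by
    rw [div_le_iff₀ hP0, hP]
    nlinarith [mul_le_mul_of_nonneg_left hxy (sub_nonneg.2 h)]
  norm_num
  linarith

/-- Sawtooth Lemma, small-gap case: if `|x - y| ≤ 2^{t-1}` then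
`E_{α,β}[|g_{t,α,β}(x) - g_{t,α,β}(y)|] ≥ (2/3)·|x - y|`. -/
theorem sawtooth_expected_gap_small (t : ℕ) (x y : ℝ) (hx : 0 ≤ x) (hy : 0 ≤ y)
    (hxy : |x - y| ≤ 2 ^ t / 2) :
    (2 / 3) * |x - y| ≤
      (1 / 4) * ∫ β in (0:ℝ)..4, ∫ α in (0:ℝ)..1,
        |sawtooth t (β * x + α * 2 ^ (t + 1)) - sawtooth t (β * y + α * 2 ^ (t + 1))| := by
  rcases le_total y x with h | h
  · rw [abs_of_nonneg (sub_nonneg.2 h)] at hxy ⊢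
    exact sawtooth_gap_aux t x y h hxy
  · rw [abs_sub_comm, abs_of_nonneg (sub_nonneg.2 h)] at hxy
    rw [abs_sub_comm x y, abs_of_nonneg (sub_nonneg.2 h)]
    simp_rw [fun β α : ℝ => abs_sub_comm (sawtooth t (β * x + α * 2 ^ (t + 1)))
      (sawtooth t (β * y + α * 2 ^ (t + 1)))]
    exact sawtooth_gap_aux t y x h hxy
end

section
/- (Composition Lemma.) Let (X,d) be a finite metric space with n = |X| ≥ 2 points, let (Ω, μ) be a probability space, and let f : Ω → X → ℝ^s be a random function such that for each v ∈ X and each coordinate j ∈ {1,…,s} the map ω ↦ f_j(ω)(v) is measurable and integrable, and such that for constants ρ, τ ≥ 1 and k ∈ ℕ: (1) for every ω ∈ Ω, every u,v ∈ X and every j, |f_j(ω)(v) − f_j(ω)(u)| ≤ ρ·d(u,v); (2) for every u,v ∈ X there exists a coordinate j with E_ω[|f_j(ω)(v) − f_j(ω)(u)|] ≥ d(u,v)/τ; (3) for every ω ∈ Ω and every v ∈ X, the vector f(ω)(v) has at most k nonzero coordinates. Then for every real p ≥ 1 there exist D ∈ ℕ and a map g : X → ℝ^D such that for all u,v ∈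 X, d(u,v)/(C·ρ·τ) ≤ ‖g(v) − g(u)‖_p ≤ C·ρ·k^{1/p}·d(u,v), where C > 0 is a universal constant; in particular (X,d) embeds into ℓ_p with distortion at most C'·ρ²·τ·k^{1/p} for a universal constant C'. -/
open MeasureTheory

/-- Composition Lemma: a random function into `ℝ^s` which is per-coordinate `ρ`-Lipschitz,
has for each pair a coordinate with expected contribution at least `d(u,v)/τ`, and whose
values have support of size at most `k`, yields for every `p ≥ 1` an embedding into
`ℓ_p^D` with contraction `O(ρτ)` and expansion `O(ρ k^{1/p})`. -/
theorem composition_lemma :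
    ∃ C : ℝ, 0 < C ∧
      ∀ (X : Type) [MetricSpace X] [Fintype X], 2 ≤ Fintype.card X →
      ∀ (Ω : Type) [MeasurableSpace Ω] (μ : Measure Ω), IsProbabilityMeasure μ →
      ∀ (s : ℕ) (f : Ω → X → Fin s → ℝ) (ρ τ : ℝ) (k : ℕ),
        1 ≤ ρ → 1 ≤ τ →
        (∀ (v : X) (j : Fin s), Integrable (fun ω => f ω v j) μ) →
        (∀ (ω : Ω) (u v : X) (j : Fin s), |f ω v j - f ω u j| ≤ ρ * dist u v) →
        (∀ u v : X, ∃ j : Fin s, dist u v / τ ≤ ∫ ω, |f ω v j - f ω u j| ∂μ) →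
        (∀ (ω : Ω) (v : X),
          (Finset.univ.filter (fun j : Fin s => f ω v j ≠ 0)).card ≤ k) →
        ∀ p : ℝ, 1 ≤ p →
          ∃ (D : ℕ) (g : X → Fin D → ℝ), ∀ u v : X,
            dist u v / (C * ρ * τ) ≤ (∑ j, |g v j - g u j| ^ p) ^ (1 / p) ∧
            (∑ j, |g v j - g u j| ^ p) ^ (1 / p) ≤ C * ρ * (k : ℝ) ^ (1 / p) * dist u v := by
  refine ⟨2, by norm_num, ?_⟩
  intro X _ _ _hX Ω _ μ hμ s f ρ τ k hρ hτ hint hLip hexp hsupp p hp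
  have hp0 : 0 < p := by linarith
  have hτ0 : 0 < τ := by linarith
  have hρ0 : 0 < ρ := by linarith
  -- a small ε
  obtain ⟨ε, hε0, hε⟩ : ∃ ε : ℝ, 0 < ε ∧ ∀ u v : X, u ≠ v → ε < dist u v / (2 * τ) := by
    have h1 : ∀ᶠ ε : ℝ in nhdsWithin 0 (Set.Ioi 0),
        ∀ u v : X, u ≠ v → ε < dist u v / (2 * τ) := by
      rw [Filter.eventually_all]
      intro u
      rw [Filter.eventually_all]
      intro v
      by_cases huv : u = v
      · simp [huv]
      · have : 0 < dist u v / (2 * τ) := div_pos (dist_pos.2 huv) (by linarith)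
        filter_upwards [nhdsWithin_le_nhds (Iio_mem_nhds this)] with e he _ using he
    obtain ⟨ε, h, h'⟩ := (h1.and self_mem_nhdsWithin).exists
    exact ⟨ε, h', h⟩
  let F : Ω → (X × X × Fin s → ℝ) := fun ω a => |f ω a.2.1 a.2.2 - f ω a.1 a.2.2|
  have hFint : Integrable F μ := by
    refine Integrable.of_eval (fun a => ?_)
    exact ((hint a.2.1 a.2.2).sub (hint a.1 a.2.2)).abs
  have hmem : ∫ ω, F ω ∂μ ∈ closure (convexHull ℝ (Set.range F)) := by
    refine Convex.integral_mem (convex_convexHull ℝ _).closure isClosed_closure ?_ hFint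
    exact Filter.Eventually.of_forall
      (fun ω => subset_closure (subset_convexHull ℝ _ (Set.mem_range_self ω)))
  obtain ⟨y, hy, hdist⟩ := Metric.mem_closure_iff.1 hmem ε hε0
  obtain ⟨ι, _, w, z, hw0, hw1, hz, hwz⟩ := mem_convexHull_iff_exists_fintype.1 hy
  choose ω hω using hz
  have hlow : ∀ u v : X, ∃ j : Fin s,
      dist u v / (2 * τ) ≤ ∑ i, w i * |f (ω i) v j - f (ω i) u j| := by
    intro u v
    obtain ⟨j, hj⟩ := hexp u v
    refine ⟨j, ?_⟩
    by_cases huv : u = v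
    · simp [huv]
    have h1 := hε u v huv
    have h2 : dist ((∫ ω, F ω ∂μ) (u, v, j)) (y (u, v, j)) < ε :=
      lt_of_le_of_lt (dist_le_pi_dist _ _ _) hdist
    have h3 : (∫ ω, F ω ∂μ) (u, v, j) = ∫ ω, |f ω v j - f ω u j| ∂μ :=
      eval_integral (fun a => ((hint a.2.1 a.2.2).sub (hint a.1 a.2.2)).abs) (u, v, j)
    have h4 : y (u, v, j) = ∑ i, w i * |f (ω i) v j - f (ω i) u j| := by
      rw [← hwz, Finset.sum_apply]
      refine Finset.sum_congr rfl (fun i _ => ?_)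
      rw [← hω i]
      rfl
    rw [h3, h4, Real.dist_eq] at h2
    have h5 := (abs_lt.1 h2).2
    have h6 : dist u v / τ = dist u v / (2 * τ) + dist u v / (2 * τ) := by
      field_simp
      ring
    linarith
  let e := Fintype.equivFin (ι × Fin s)
  let G : X → ι × Fin s → ℝ := fun v a => w a.1 ^ (1 / p) * f (ω a.1) v a.2
  have hsum : ∀ u v : X, ∑ l, |G v (e.symm l) - G u (e.symm l)| ^ p
      = ∑ i, w i * ∑ j, |f (ω i) v j - f (ω i) u j| ^ p := by
    intro u v
    rw [e.symm.sum_comp (fun a => |G v a - G u a| ^ p), Fintype.sum_prod_type]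
    refine Finset.sum_congr rfl (fun i _ => ?_)
    rw [Finset.mul_sum]
    refine Finset.sum_congr rfl (fun j _ => ?_)
    have hwp : 0 ≤ w i ^ (1 / p) := Real.rpow_nonneg (hw0 i) _
    simp only [G]
    rw [← mul_sub, abs_mul, abs_of_nonneg hwp, Real.mul_rpow hwp (abs_nonneg _),
      ← Real.rpow_mul (hw0 i), one_div_mul_cancel hp0.ne', Real.rpow_one]
  refine ⟨_, fun v l => G v (e.symm l), fun u v => ?_⟩
  rw [hsum u v]
  have hd : 0 ≤ dist u v := dist_nonneg
  constructor
  · obtain ⟨j, hj⟩ := hlow u v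
    calc dist u v / (2 * ρ * τ) ≤ dist u v / (2 * τ) := by
          apply div_le_div_of_nonneg_left hd (by positivity)
          nlinarith
      _ ≤ ∑ i, w i * |f (ω i) v j - f (ω i) u j| := hj
      _ ≤ (∑ i, w i * |f (ω i) v j - f (ω i) u j| ^ p) ^ (1 / p) :=
          Real.arith_mean_le_rpow_mean _ _ _ (fun i _ => hw0 i) hw1 (fun i _ => abs_nonneg _) hp
      _ ≤ _ := by
          refine Real.rpow_le_rpow ?_ ?_ (by positivity)
          · exact Finset.sum_nonneg (fun i _ => mul_nonneg (hw0 i) (by positivity))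
          · refine Finset.sum_le_sum (fun i _ => mul_le_mul_of_nonneg_left ?_ (hw0 i))
            exact Finset.single_le_sum (f := fun j => |f (ω i) v j - f (ω i) u j| ^ p)
              (fun j _ => by positivity) (Finset.mem_univ j)
  · have hup : ∀ i, ∑ j, |f (ω i) v j - f (ω i) u j| ^ p ≤ 2 * k * (ρ * dist u v) ^ p := by
      intro i
      let S := Finset.univ.filter (fun j : Fin s => f (ω i) v j ≠ 0) ∪
        Finset.univ.filter (fun j : Fin s => f (ω i) u j ≠ 0)
      have hS : (S.card : ℝ) ≤ 2 * k := by
        have h1 := Finset.card_union_le (Finset.univ.filter (fun j : Fin s => f (ω i) v j ≠ 0))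
          (Finset.univ.filter (fun j : Fin s => f (ω i) u j ≠ 0))
        have h2 := hsupp (ω i) v
        have h3 := hsupp (ω i) u
        have : S.card ≤ 2 * k := by
          simp only [S]
          omega
        exact_mod_cast this
      have h0 : ∑ j ∈ S, |f (ω i) v j - f (ω i) u j| ^ p
          = ∑ j, |f (ω i) v j - f (ω i) u j| ^ p := by
        refine Finset.sum_subset (Finset.subset_univ _) (fun j _ hj => ?_)
        have hj' : f (ω i) v j = 0 ∧ f (ω i) u j = 0 := by
          simpa [S, not_or] using hj
        simp [hj'.1, hj'.2, Real.zero_rpow hp0.ne']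
      rw [← h0]
      calc _ ≤ ∑ j ∈ S, (ρ * dist u v) ^ p :=
            Finset.sum_le_sum (fun j _ =>
              Real.rpow_le_rpow (abs_nonneg _) (hLip (ω i) u v j) hp0.le)
        _ = S.card * (ρ * dist u v) ^ p := by simp
        _ ≤ _ := mul_le_mul_of_nonneg_right hS (by positivity)
    have hnn : 0 ≤ ∑ i, w i * ∑ j, |f (ω i) v j - f (ω i) u j| ^ p :=
      Finset.sum_nonneg (fun i _ => mul_nonneg (hw0 i)
        (Finset.sum_nonneg (fun j _ => by positivity)))
    calc _ ≤ (2 * k * (ρ * dist u v) ^ p) ^ (1 / p) := by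
          refine Real.rpow_le_rpow hnn ?_ (by positivity)
          calc _ ≤ ∑ i, w i * (2 * k * (ρ * dist u v) ^ p) :=
                Finset.sum_le_sum (fun i _ => mul_le_mul_of_nonneg_left (hup i) (hw0 i))
            _ = _ := by rw [← Finset.sum_mul, hw1, one_mul]
      _ = (2 : ℝ) ^ (1 / p) * (k : ℝ) ^ (1 / p) * (ρ * dist u v) := by
          rw [Real.mul_rpow (by positivity) (by positivity),
            Real.mul_rpow (by positivity) (by positivity),
            ← Real.rpow_mul (by positivity), mul_one_div_cancel hp0.ne', Real.rpow_one]
      _ ≤ 2 * (k : ℝ) ^ (1 / p) * (ρ * dist u v) := by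
          have h2 : (2 : ℝ) ^ (1 / p) ≤ 2 := by
            calc (2 : ℝ) ^ (1 / p) ≤ 2 ^ (1 : ℝ) :=
                  Real.rpow_le_rpow_of_exponent_le (by norm_num)
                    ((div_le_one hp0).2 hp)
              _ = 2 := Real.rpow_one 2
          gcongr
      _ = _ := by ring
end

section
/- (ℓ_p quadrilateral inequality.) For every real p ≥ 2 and all vectors a, b, c, d in ℓ_p, ‖a − c‖_p^p + ‖b − d‖_p^p ≤ 2^{p−2}·(‖a − b‖_p^p + ‖b − c‖_p^p + ‖c − d‖_p^p + ‖d − a‖_p^p). -/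
lemma quad_cvx (q : ℝ) (hq : 1 ≤ q) (x y : ℝ) (hx : 0 ≤ x) (hy : 0 ≤ y) :
    (x + y) ^ q ≤ (2 : ℝ) ^ (q - 1) * (x ^ q + y ^ q) := by
  have h := NNReal.rpow_add_le_mul_rpow_add_rpow ⟨x, hx⟩ ⟨y, hy⟩ hq
  exact_mod_cast h

lemma quad_superadd (q : ℝ) (hq : 1 ≤ q) (x y : ℝ) (hx : 0 ≤ x) (hy : 0 ≤ y) :
    x ^ q + y ^ q ≤ (x + y) ^ q := by
  have h := NNReal.add_rpow_le_rpow_add ⟨x, hx⟩ ⟨y, hy⟩ hq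
  exact_mod_cast h

lemma quad_sq (p t : ℝ) : |t| ^ p = (t ^ 2) ^ (p / 2) := by
  rw [← sq_abs, ← Real.rpow_natCast, ← Real.rpow_mul (abs_nonneg t)]
  congr 1
  push_cast
  ring

/-- Scalar Clarkson inequality. -/
lemma quad_clarkson (p : ℝ) (hp : 2 ≤ p) (u v : ℝ) :
    |u + v| ^ p + |u - v| ^ p ≤ (2 : ℝ) ^ (p - 1) * (|u| ^ p + |v| ^ p) := by
  have hq : 1 ≤ p / 2 := by linarith
  simp only [quad_sq p]
  calc ((u + v) ^ 2) ^ (p / 2) + ((u - v) ^ 2) ^ (p / 2)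
      ≤ ((u + v) ^ 2 + (u - v) ^ 2) ^ (p / 2) :=
        quad_superadd _ hq _ _ (sq_nonneg _) (sq_nonneg _)
    _ = (2 * (u ^ 2 + v ^ 2)) ^ (p / 2) := by congr 1; ring
    _ = 2 ^ (p / 2) * (u ^ 2 + v ^ 2) ^ (p / 2) :=
        Real.mul_rpow (by norm_num) (by positivity)
    _ ≤ 2 ^ (p / 2) * (2 ^ (p / 2 - 1) * ((u ^ 2) ^ (p / 2) + (v ^ 2) ^ (p / 2))) := by
        gcongr
        exact quad_cvx _ hq _ _ (sq_nonneg _) (sq_nonneg _)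
    _ = 2 ^ (p - 1) * ((u ^ 2) ^ (p / 2) + (v ^ 2) ^ (p / 2)) := by
        rw [← mul_assoc, ← Real.rpow_add (by norm_num)]
        congr 2
        ring

lemma quad_mid (p : ℝ) (hp : 2 ≤ p) (x y : ℝ) :
    |(x + y) / 2| ^ p ≤ (|x| ^ p + |y| ^ p) / 2 := by
  have h1 : |(x + y) / 2| ≤ |x| / 2 + |y| / 2 := by
    rw [abs_div, abs_two]
    linarith [abs_add_le x y]
  have h2 := quad_cvx p (by linarith) (|x| / 2) (|y| / 2) (by positivity) (by positivity)
  have h3 : |(x + y) / 2| ^ p ≤ (|x| / 2 + |y| / 2) ^ p :=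
    Real.rpow_le_rpow (abs_nonneg _) h1 (by linarith)
  refine (h3.trans h2).trans (le_of_eq ?_)
  rw [Real.div_rpow (abs_nonneg _) (by norm_num), Real.div_rpow (abs_nonneg _) (by norm_num),
    Real.rpow_sub (by norm_num), Real.rpow_one]
  have : (2 : ℝ) ^ p ≠ 0 := by positivity
  field_simp

lemma quad_scalar (p : ℝ) (hp : 2 ≤ p) (a b c d : ℝ) :
    |a - c| ^ p + |b - d| ^ p ≤
      (2 : ℝ) ^ (p - 2) * (|a - b| ^ p + |b - c| ^ p + |c - d| ^ p + |d - a| ^ p) := by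
  have h := quad_clarkson p hp (((b - c) + (a - d)) / 2) (((a - b) + (d - c)) / 2)
  have e1 : ((b - c) + (a - d)) / 2 + ((a - b) + (d - c)) / 2 = a - c := by ring
  have e2 : ((b - c) + (a - d)) / 2 - ((a - b) + (d - c)) / 2 = b - d := by ring
  rw [e1, e2] at h
  have h1 := quad_mid p hp (b - c) (a - d)
  have h2 := quad_mid p hp (a - b) (d - c)
  rw [abs_sub_comm a d] at h1
  rw [abs_sub_comm d c] at h2
  have e3 : (2 : ℝ) ^ (p - 1) = 2 ^ (p - 2) * 2 := by
    rw [← Real.rpow_add_one (by norm_num)]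
    congr 1
    ring
  have h3 := mul_le_mul_of_nonneg_left (add_le_add h1 h2)
    (by positivity : (0 : ℝ) ≤ 2 ^ (p - 1))
  refine (h.trans h3).trans (le_of_eq ?_)
  rw [e3]
  ring

/-- The `ℓ_p` quadrilateral inequality: for `p ≥ 2` and vectors `a, b, c, d` in `ℓ_p`,
`‖a-c‖_p^p + ‖b-d‖_p^p ≤ 2^{p-2}·(‖a-b‖_p^p + ‖b-c‖_p^p + ‖c-d‖_p^p + ‖d-a‖_p^p)`. -/
theorem lp_quadrilateral_inequality (p : ℝ) (hp : 2 ≤ p)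
    (a b c d : lp (fun _ : ℕ => ℝ) (ENNReal.ofReal p)) :
    ‖a - c‖ ^ p + ‖b - d‖ ^ p ≤
      (2 : ℝ) ^ (p - 2) * (‖a - b‖ ^ p + ‖b - c‖ ^ p + ‖c - d‖ ^ p + ‖d - a‖ ^ p) := by
  have hp0 : 0 < p := by linarith
  have ht : (ENNReal.ofReal p).toReal = p := ENNReal.toReal_ofReal hp0.le
  have hs : ∀ f : lp (fun _ : ℕ => ℝ) (ENNReal.ofReal p),
      HasSum (fun i => |f i| ^ p) (‖f‖ ^ p) := by
    intro f
    have h := lp.hasSum_norm (by rw [ht]; exact hp0) f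
    rw [ht] at h
    simpa only [Real.norm_eq_abs] using h
  refine hasSum_le (fun i => ?_) ((hs (a - c)).add (hs (b - d)))
    (((((hs (a - b)).add (hs (b - c))).add (hs (c - d))).add (hs (d - a))).mul_left _)
  exact quad_scalar p hp (a i) (b i) (c i) (d i)
end

section
/- (Diamond graph ℓ_p Poincaré-type inequality.) For every real p ≥ 2, every k ≥ 1, and every map f from the vertex set of 𝒟_k to ℓ_p, ∑_{i=0}^{k} α_i · ∑_{{x,y} ∈ D_i} ‖f(x) − f(y)‖_p^p ≤ α_{k+1} · ∑_{{x,y} ∈ E_k} ‖f(x) − f(y)‖_p^p, where α_{k+1} = 1. -/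
/-- Index type for the edges of the diamond graph `𝒟_k`: each edge of `𝒟_k`
is replaced by four edges in `𝒟_{k+1}`. -/
def DEdge : ℕ → Type
  | 0 => Unit
  | k + 1 => DEdge k × Fin 4

/-- Vertices of the diamond graph `𝒟_k`: `𝒟_0` has two vertices `s, t`; `𝒟_{k+1}`
has the vertices of `𝒟_k` together with two new vertices (a level-`(k+1)` diagonal)
for each edge of `𝒟_k`. -/
def DVert : ℕ → Type
  | 0 => Fin 2
  | k + 1 => DVert k ⊕ (DEdge k × Bool)

/-- Endpoints of each edge of `𝒟_k`: the edge `{x,y}` of `𝒟_k` is replaced in `𝒟_{k+1}`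
by the four edges `{x,a}, {a,y}, {y,b}, {b,x}` where `{a,b}` is the new diagonal. -/
def ends : (k : ℕ) → DEdge k → DVert k × DVert k
  | 0, _ => ((0 : Fin 2), (1 : Fin 2))
  | k + 1, p =>
      ![((Sum.inl (ends k p.1).1 : DVert (k + 1)), (Sum.inr (p.1, false) : DVert (k + 1))),
        ((Sum.inr (p.1, false) : DVert (k + 1)), (Sum.inl (ends k p.1).2 : DVert (k + 1))),
        ((Sum.inl (ends k p.1).2 : DVert (k + 1)), (Sum.inr (p.1, true) : DVert (k + 1))),
        ((Sum.inr (p.1, true) : DVert (k + 1)), (Sum.inl (ends k p.1).1 : DVert (k + 1)))] p.2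

instance instFintypeDEdge : ∀ k, Fintype (DEdge k)
  | 0 => inferInstanceAs (Fintype Unit)
  | k + 1 => letI := instFintypeDEdge k; inferInstanceAs (Fintype (DEdge k × Fin 4))

instance instFintypeDVert : ∀ k, Fintype (DVert k)
  | 0 => inferInstanceAs (Fintype (Fin 2))
  | k + 1 =>
      letI := instFintypeDVert k; letI := instFintypeDEdge k
      inferInstanceAs (Fintype (DVert k ⊕ (DEdge k × Bool)))

/-- The inclusion of the vertices of `𝒟_i` into the vertices of `𝒟_{i+m}`. -/
def liftAdd : (i m : ℕ) → DVert i → DVert (i + m)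
  | _, 0, v => v
  | i, m + 1, v => Sum.inl (liftAdd i m v)

/-- The inclusion of the vertices of `𝒟_i` into the vertices of `𝒟_k` for `i ≤ k`. -/
def liftLE {i k : ℕ} (h : i ≤ k) (v : DVert i) : DVert k :=
  cast (congrArg DVert (Nat.add_sub_cancel' h)) (liftAdd i (k - i) v)

/-- The diamond graph `𝒟_k` as a simple graph on `DVert k`. -/
def diamondGraph (k : ℕ) : SimpleGraph (DVert k) :=
  SimpleGraph.fromRel (fun x y => ∃ e : DEdge k, ends k e = (x, y))

/-- The vertex `s` of `𝒟_0`. -/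
def dS : DVert 0 := (0 : Fin 2)

/-- The vertex `t` of `𝒟_0`. -/
def dT : DVert 0 := (1 : Fin 2)

/-- The first vertex of the level-`(j+1)` diagonal created from the edge `e` of `𝒟_j`,
viewed in `𝒟_k` (for `j + 1 ≤ k`). -/
def diag₁ {j k : ℕ} (h : j + 1 ≤ k) (e : DEdge j) : DVert k :=
  liftLE h (Sum.inr (e, false) : DVert (j + 1))

/-- The second vertex of the level-`(j+1)` diagonal created from the edge `e` of `𝒟_j`,
viewed in `𝒟_k` (for `j + 1 ≤ k`). -/
def diag₂ {j k : ℕ} (h : j + 1 ≤ k) (e : DEdge j) : DVert k :=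
  liftLE h (Sum.inr (e, true) : DVert (j + 1))

/-- The weights `α_i`: `α_0 = 2^{-k(p-2)}` and `α_i = 2^{-(k-i+1)(p-2)}` for `i ≥ 1`. -/
noncomputable def dAlpha (k : ℕ) (p : ℝ) (i : ℕ) : ℝ :=
  if i = 0 then (2 : ℝ) ^ (-(k : ℝ) * (p - 2))
  else (2 : ℝ) ^ (-((k : ℝ) - (i : ℝ) + 1) * (p - 2))

/-- Real four-point inequality. -/
theorem four_point_real (p : ℝ) (hp : 2 ≤ p) (x y a b : ℝ) :
    |x - y| ^ p + |a - b| ^ p ≤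
      (2 : ℝ) ^ (p - 2) * (|x - a| ^ p + |a - y| ^ p + |y - b| ^ p + |b - x| ^ p) := by
  have hq : 1 ≤ p / 2 := by linarith
  have key : ∀ z : ℝ, |z| ^ p = (z ^ 2) ^ (p / 2) := by
    intro z
    rw [← sq_abs, ← Real.rpow_natCast, ← Real.rpow_mul (abs_nonneg z)]
    congr 1
    push_cast
    ring
  have h1 : ((x - y) ^ 2) ^ (p / 2) + ((a - b) ^ 2) ^ (p / 2)
      ≤ ((x - y) ^ 2 + (a - b) ^ 2) ^ (p / 2) :=
    Real.add_rpow_le_rpow_add (sq_nonneg _) (sq_nonneg _) hq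
  have h2 : ((x - y) ^ 2 + (a - b) ^ 2) ^ (p / 2)
      ≤ ((x - a) ^ 2 + (a - y) ^ 2 + (y - b) ^ 2 + (b - x) ^ 2) ^ (p / 2) := by
    apply Real.rpow_le_rpow (by positivity) _ (by linarith)
    nlinarith [sq_nonneg (x + y - a - b)]
  have h3 := Real.rpow_sum_le_const_mul_sum_rpow_of_nonneg (Finset.univ : Finset (Fin 4))
    (f := ![(x - a) ^ 2, (a - y) ^ 2, (y - b) ^ 2, (b - x) ^ 2]) hq (by
      intro i _
      fin_cases i <;> simp <;> positivity)
  have h4 : (4 : ℝ) ^ (p / 2 - 1) = (2 : ℝ) ^ (p - 2) := by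
    rw [show (4 : ℝ) = (2 : ℝ) ^ (2 : ℝ) by norm_num, ← Real.rpow_mul (by norm_num)]
    congr 1
    ring
  simp [Fin.sum_univ_four] at h3
  rw [h4] at h3
  simp only [key]
  linarith

/-- Four-point inequality in `ℓ_p`. -/
theorem four_point_lp (p : ℝ) (hp : 2 ≤ p)
    (x y a b : lp (fun _ : ℕ => ℝ) (ENNReal.ofReal p)) :
    (2 : ℝ) ^ (-(p - 2)) * (‖x - y‖ ^ p + ‖a - b‖ ^ p) ≤
      ‖x - a‖ ^ p + ‖a - y‖ ^ p + ‖y - b‖ ^ p + ‖b - x‖ ^ p := by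
  have hp0 : (ENNReal.ofReal p).toReal = p := ENNReal.toReal_ofReal (by linarith)
  have hs : ∀ u v : lp (fun _ : ℕ => ℝ) (ENNReal.ofReal p),
      HasSum (fun i => |u i - v i| ^ p) (‖u - v‖ ^ p) := by
    intro u v
    have h := lp.hasSum_norm (p := ENNReal.ofReal p) (by rw [hp0]; linarith) (u - v)
    rw [hp0] at h
    exact h
  have h := hasSum_le (fun i => four_point_real p hp (x i) (y i) (a i) (b i))
    ((hs x y).add (hs a b))
    (((((hs x a).add (hs a y)).add (hs y b)).add (hs b x)).mul_left ((2 : ℝ) ^ (p - 2)))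
  rw [Real.rpow_neg (by norm_num), inv_mul_le_iff₀ (by positivity)]
  exact h

/-- Inclusion of old vertices. -/
def vinl {k : ℕ} (v : DVert k) : DVert (k + 1) := by
  unfold DVert
  exact Sum.inl v

/-- Typed new vertices. -/
def vinr {k : ℕ} (e : DEdge k) (b : Bool) : DVert (k + 1) := by
  unfold DVert
  exact Sum.inr (e, b)

theorem cast_inl {m n : ℕ} (h : m = n) (h' : DVert (m + 1) = DVert (n + 1)) (v : DVert m) :
    cast h' (vinl v) = vinl (cast (congrArg DVert h) v) := by
  subst h
  rfl

theorem cast_liftAdd {i k m m' : ℕ} (hm : m = m') (h : i + m = k) (h' : i + m' = k)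
    (v : DVert i) :
    cast (congrArg DVert h) (liftAdd i m v) = cast (congrArg DVert h') (liftAdd i m' v) := by
  subst hm
  rfl

theorem liftLE_succ {i k : ℕ} (h : i ≤ k) (h' : i ≤ k + 1) (v : DVert i) :
    liftLE h' v = vinl (liftLE h v) := by
  unfold liftLE
  rw [cast_liftAdd (show k + 1 - i = (k - i) + 1 by omega) (Nat.add_sub_cancel' h') (by omega)]
  exact cast_inl (Nat.add_sub_cancel' h) _ (liftAdd i (k - i) v)

theorem liftLE_self {i : ℕ} (h : i ≤ i) (v : DVert i) : liftLE h v = v := by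
  unfold liftLE
  rw [cast_liftAdd (show i - i = 0 by omega) (Nat.add_sub_cancel' h) (by omega)]
  rfl

theorem dAlpha_last (k : ℕ) (p : ℝ) : dAlpha k p (k + 1) = 1 := by
  simp [dAlpha]

theorem dAlpha_succ (k : ℕ) (p : ℝ) (i : ℕ) :
    dAlpha (k + 1) p i = (2 : ℝ) ^ (-(p - 2)) * dAlpha k p i := by
  unfold dAlpha
  split_ifs <;> rw [← Real.rpow_add (by norm_num)] <;> congr 1 <;> push_cast <;> ring

theorem sum_edge_succ (k : ℕ) (F : DEdge (k + 1) → ℝ) :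
    ∑ e, F e = ∑ e : DEdge k, (F (e, 0) + F (e, 1) + F (e, 2) + F (e, 3)) := by
  refine (Fintype.sum_prod_type (α₁ := DEdge k) (α₂ := Fin 4) F).trans ?_
  exact Finset.sum_congr rfl fun e _ => Fin.sum_univ_four _

theorem diamond_aux (p : ℝ) (hp : 2 ≤ p) (k : ℕ)
    (f : DVert k → lp (fun _ : ℕ => ℝ) (ENNReal.ofReal p)) :
    dAlpha k p 0 * ‖f (liftLE (Nat.zero_le k) dS) - f (liftLE (Nat.zero_le k) dT)‖ ^ p
      + ∑ j : Fin k, dAlpha k p ((j : ℕ) + 1) *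
          ∑ e : DEdge (j : ℕ), ‖f (diag₁ j.isLt e) - f (diag₂ j.isLt e)‖ ^ p
    ≤ ∑ e : DEdge k, ‖f (ends k e).1 - f (ends k e).2‖ ^ p := by
  induction k with
  | zero =>
    have h : ∑ e : DEdge 0, ‖f (ends 0 e).1 - f (ends 0 e).2‖ ^ p = ‖f dS - f dT‖ ^ p :=
      Fintype.sum_unique (ι := Unit) _
    rw [h, liftLE_self, liftLE_self]
    simp [dAlpha]
  | succ k ih =>
    have ih' := ih (fun v => f (vinl v))
    set c : ℝ := (2 : ℝ) ^ (-(p - 2)) with hc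
    have hc0 : 0 ≤ c := by positivity
    have step : c * (∑ e : DEdge k,
          ‖f (vinl (ends k e).1) - f (vinl (ends k e).2)‖ ^ p)
        + c * (∑ e : DEdge k, ‖f (vinr e false) - f (vinr e true)‖ ^ p)
        ≤ ∑ e : DEdge (k + 1), ‖f (ends (k + 1) e).1 - f (ends (k + 1) e).2‖ ^ p := by
      rw [sum_edge_succ, ← mul_add, ← Finset.sum_add_distrib, Finset.mul_sum]
      exact Finset.sum_le_sum fun e _ => four_point_lp p hp _ _ _ _
    refine le_trans ?_ step
    have hlast : dAlpha (k + 1) p (k + 1) = c := by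
      rw [dAlpha_succ, dAlpha_last, mul_one]
    rw [Fin.sum_univ_castSucc, ← add_assoc]
    refine add_le_add ?_ (le_of_eq ?_)
    · refine le_trans (le_of_eq ?_) (mul_le_mul_of_nonneg_left ih' hc0)
      rw [mul_add, Finset.mul_sum, dAlpha_succ, mul_assoc,
        liftLE_succ (Nat.zero_le k), liftLE_succ (Nat.zero_le k)]
      congr 1
      refine Finset.sum_congr rfl fun j _ => ?_
      rw [← mul_assoc, ← dAlpha_succ]
      have hj : (j : ℕ) + 1 ≤ k := j.isLt
      have e1 : ∀ e : DEdge (j : ℕ), diag₁ (Nat.le_succ_of_le hj) e = vinl (diag₁ hj e) :=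
        fun e => liftLE_succ hj _ _
      have e2 : ∀ e : DEdge (j : ℕ), diag₂ (Nat.le_succ_of_le hj) e = vinl (diag₂ hj e) :=
        fun e => liftLE_succ hj _ _
      refine congrArg (fun z => dAlpha (k + 1) p ((j : ℕ) + 1) * z) ?_
      refine Finset.sum_congr rfl fun e _ => ?_
      exact congrArg₂ (fun u v => ‖f u - f v‖ ^ p) (e1 e) (e2 e)
    · rw [← hlast]
      refine congrArg (fun z => dAlpha (k + 1) p (k + 1) * z) ?_
      refine Finset.sum_congr rfl fun e _ => ?_
      exact congrArg₂ (fun u v => ‖f u - f v‖ ^ p)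
        (liftLE_self (le_refl (k + 1)) (vinr e false))
        (liftLE_self (le_refl (k + 1)) (vinr e true))

/-- Diamond graph `ℓ_p` Poincaré-type inequality: for `p ≥ 2` and `f : 𝒟_k → ℓ_p`,
`∑_{i=0}^{k} α_i ∑_{{x,y} ∈ D_i} ‖f x - f y‖^p ≤ α_{k+1} ∑_{{x,y} ∈ E_k} ‖f x - f y‖^p`,
where the level-`0` "diagonal" is the pair `{s,t}` and for `1 ≤ i ≤ k` the level-`i`
diagonals are indexed by the edges of `𝒟_{i-1}`. -/
theorem diamond_poincare (p : ℝ) (hp : 2 ≤ p) (k : ℕ) (hk : 1 ≤ k)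
    (f : DVert k → lp (fun _ : ℕ => ℝ) (ENNReal.ofReal p)) :
    dAlpha k p 0 * ‖f (liftLE (Nat.zero_le k) dS) - f (liftLE (Nat.zero_le k) dT)‖ ^ p
      + ∑ j : Fin k, dAlpha k p ((j : ℕ) + 1) *
          ∑ e : DEdge (j : ℕ), ‖f (diag₁ j.isLt e) - f (diag₂ j.isLt e)‖ ^ p
    ≤ dAlpha k p (k + 1) *
        ∑ e : DEdge k, ‖f (ends k e).1 - f (ends k e).2‖ ^ p := by
  rw [dAlpha_last, one_mul]
  exact diamond_aux p hp k f
end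

section
/- (Lower bound for embedding diamond graphs into ℓ_p, p ≥ 2.) For every real p ≥ 2, every k ≥ 1, and every map f from the vertex set of 𝒟_k to ℓ_p and every ρ ≥ 1 such that d(x,y) ≤ ‖f(x) − f(y)‖_p ≤ ρ·d(x,y) for all vertices x, y of 𝒟_k, one has ρ ≥ ((k+1)/2^{p−2})^{1/p}. In particular, every embedding of 𝒟_k into ℓ_p has distortion Ω(k^{1/p}). -/
theorem aux_mean (q x y : ℝ) (hq : 1 ≤ q) (hx : 0 ≤ x) (hy : 0 ≤ y) :
    ((x + y) / 2) ^ q ≤ (x ^ q + y ^ q) / 2 := by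
  have h := (convexOn_rpow hq).2 (Set.mem_Ici.2 hx) (Set.mem_Ici.2 hy)
    (by norm_num : (0 : ℝ) ≤ 1 / 2) (by norm_num : (0 : ℝ) ≤ 1 / 2) (by norm_num)
  simp only [smul_eq_mul] at h
  have e : (x + y) / 2 = 1 / 2 * x + 1 / 2 * y := by ring
  rw [e]
  linarith

theorem aux_abs_sq (p a : ℝ) : |a| ^ p = (a ^ 2) ^ (p / 2) := by
  rw [← sq_abs, ← Real.rpow_natCast, ← Real.rpow_mul (abs_nonneg a)]
  congr 1
  push_cast
  ring

/-- Scalar Clarkson inequality. -/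
theorem aux_clarkson (p a b : ℝ) (hp : 2 ≤ p) :
    2 * (|a| ^ p + |b| ^ p) ≤ |a + b| ^ p + |a - b| ^ p := by
  have hq : 1 ≤ p / 2 := by linarith
  rw [aux_abs_sq p a, aux_abs_sq p b, aux_abs_sq p (a + b), aux_abs_sq p (a - b)]
  have h1 := Real.add_rpow_le_rpow_add (sq_nonneg a) (sq_nonneg b) hq
  have h2 := aux_mean (p / 2) ((a + b) ^ 2) ((a - b) ^ 2) hq (sq_nonneg _) (sq_nonneg _)
  have e : ((a + b) ^ 2 + (a - b) ^ 2) / 2 = a ^ 2 + b ^ 2 := by ring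
  rw [e] at h2
  linarith

theorem aux_sub (p a b : ℝ) (hp : 2 ≤ p) :
    |a - b| ^ p ≤ 2 ^ (p - 1) * (|a| ^ p + |b| ^ p) := by
  have h1 : |a - b| ^ p ≤ (|a| + |b|) ^ p :=
    Real.rpow_le_rpow (abs_nonneg _) (abs_sub a b) (by linarith)
  have h2 := aux_mean p |a| |b| (by linarith) (abs_nonneg _) (abs_nonneg _)
  rw [Real.div_rpow (by positivity) (by norm_num)] at h2
  have h3 : (2 : ℝ) ^ p = 2 ^ (p - 1) * 2 := by
    rw [← Real.rpow_add_one (by norm_num)]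
    congr 1
    ring
  have h4 : (0 : ℝ) < 2 ^ p := by positivity
  rw [div_le_iff₀ h4, h3] at h2
  linarith

theorem aux_quad (p a b c d : ℝ) (hp : 2 ≤ p) :
    |a - c| ^ p + |b - d| ^ p ≤
      2 ^ (p - 2) * (|a - b| ^ p + |b - c| ^ p + |c - d| ^ p + |d - a| ^ p) := by
  have h1 := aux_clarkson p (a - c) (b - d) hp
  have h2 := aux_sub p (a - b) (c - d) hp
  have h3 := aux_sub p (b - c) (d - a) hp
  have e1 : a - c + (b - d) = (b - c) - (d - a) := by ring
  have e2 : a - c - (b - d) = (a - b) - (c - d) := by ring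
  rw [e1, e2] at h1
  have h4 : (2 : ℝ) ^ (p - 1) = 2 ^ (p - 2) * 2 := by
    rw [← Real.rpow_add_one (by norm_num)]
    congr 1
    ring
  rw [h4] at h2 h3
  linarith

theorem aux_quad_lp (p : ℝ) (hp : 2 ≤ p) (a b c d : lp (fun _ : ℕ => ℝ) (ENNReal.ofReal p)) :
    ‖a - c‖ ^ p + ‖b - d‖ ^ p ≤
      2 ^ (p - 2) * (‖a - b‖ ^ p + ‖b - c‖ ^ p + ‖c - d‖ ^ p + ‖d - a‖ ^ p) := by
  have hpr : (ENNReal.ofReal p).toReal = p := ENNReal.toReal_ofReal (by linarith)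
  have H : ∀ x y : lp (fun _ : ℕ => ℝ) (ENNReal.ofReal p),
      HasSum (fun i => |x i - y i| ^ p) (‖x - y‖ ^ p) := by
    intro x y
    have := lp.hasSum_norm (by rw [hpr]; linarith) (x - y)
    simpa only [hpr, lp.coeFn_sub, Pi.sub_apply, Real.norm_eq_abs] using this
  exact hasSum_le (fun i => aux_quad p (a i) (b i) (c i) (d i) hp) ((H a c).add (H b d))
    (((((H a b).add (H b c)).add (H c d)).add (H d a)).mul_left _)

theorem aux_ends_ne : ∀ (k : ℕ) (e : DEdge k), (ends k e).1 ≠ (ends k e).2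
  | 0, _ => by
      change (0 : Fin 2) ≠ (1 : Fin 2)
      decide
  | k + 1, (e, i) => by
      fin_cases i
      · exact Sum.inl_ne_inr
      · exact Sum.inr_ne_inl
      · exact Sum.inl_ne_inr
      · exact Sum.inr_ne_inl

theorem aux_adj_ends (k : ℕ) (e : DEdge k) :
    (diamondGraph k).Adj (ends k e).1 (ends k e).2 :=
  (SimpleGraph.fromRel_adj _ _ _).2 ⟨aux_ends_ne k e, Or.inl ⟨e, rfl⟩⟩

/-- Every adjacency of the graph comes from an edge. -/
theorem aux_adj_ind (k : ℕ) (P : DVert k → DVert k → Prop) (hsymm : ∀ x y, P x y → P y x)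
    (h : ∀ e, P (ends k e).1 (ends k e).2) (x y : DVert k) (hxy : (diamondGraph k).Adj x y) :
    P x y := by
  obtain ⟨_, ⟨e, he⟩ | ⟨e, he⟩⟩ := (SimpleGraph.fromRel_adj _ _ _).1 hxy
  · have := h e
    rw [he] at this
    exact this
  · have := h e
    rw [he] at this
    exact hsymm _ _ this

/-- The old vertices of the square over an edge. -/
def oldV {k : ℕ} (v : DVert k) : DVert (k + 1) := Sum.inl v

/-- The new vertices of the square over an edge. -/
def newV {k : ℕ} (e : DEdge k) (b : Bool) : DVert (k + 1) := Sum.inr (e, b)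

theorem aux_adj1 (k : ℕ) (e : DEdge k) (b : Bool) :
    (diamondGraph (k + 1)).Adj (oldV (ends k e).1) (newV e b) := by
  cases b
  · exact aux_adj_ends (k + 1) (e, (0 : Fin 4))
  · exact (aux_adj_ends (k + 1) (e, (3 : Fin 4))).symm

theorem aux_adj2 (k : ℕ) (e : DEdge k) (b : Bool) :
    (diamondGraph (k + 1)).Adj (oldV (ends k e).2) (newV e b) := by
  cases b
  · exact (aux_adj_ends (k + 1) (e, (1 : Fin 4))).symm
  · exact aux_adj_ends (k + 1) (e, (2 : Fin 4))

theorem aux_adj_succ (k : ℕ) (P : DVert (k + 1) → DVert (k + 1) → Prop)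
    (hsymm : ∀ x y, P x y → P y x)
    (h1 : ∀ e b, P (oldV (ends k e).1) (newV e b))
    (h2 : ∀ e b, P (oldV (ends k e).2) (newV e b))
    (x y : DVert (k + 1)) (hxy : (diamondGraph (k + 1)).Adj x y) : P x y := by
  refine aux_adj_ind (k + 1) P hsymm ?_ x y hxy
  rintro ⟨e, i⟩
  fin_cases i
  · exact h1 e false
  · exact hsymm _ _ (h2 e false)
  · exact h2 e true
  · exact hsymm _ _ (h1 e true)

theorem aux_reach (k : ℕ) (x y : DVert k) (h : (diamondGraph k).Reachable x y) :
    (diamondGraph (k + 1)).Reachable (oldV x) (oldV y) := by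
  obtain ⟨w⟩ := h
  induction w with
  | nil => exact SimpleGraph.Reachable.refl _
  | cons hadj _ ih =>
    refine SimpleGraph.Reachable.trans ?_ ih
    exact aux_adj_ind k (fun x y => (diamondGraph (k + 1)).Reachable (oldV x) (oldV y))
      (fun _ _ h => h.symm)
      (fun e => (aux_adj1 k e true).reachable.trans (aux_adj2 k e true).reachable.symm) _ _ hadj

theorem aux_conn : ∀ k, (diamondGraph k).Connected
  | 0 => by
    have key : (diamondGraph 0).Adj dS dT := aux_adj_ends 0 ()
    rw [SimpleGraph.connected_iff_exists_forall_reachable]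
    refine ⟨dS, fun w => ?_⟩
    have hw : w = dS ∨ w = dT := by
      change Fin 2 at w
      change w = (0 : Fin 2) ∨ w = (1 : Fin 2)
      omega
    rcases hw with rfl | rfl
    · exact SimpleGraph.Reachable.refl _
    · exact key.reachable
  | k + 1 => by
    have ih := aux_conn k
    rw [SimpleGraph.connected_iff_exists_forall_reachable] at ih ⊢
    obtain ⟨v, hv⟩ := ih
    refine ⟨oldV v, fun w => ?_⟩
    rcases w with w | ⟨e, b⟩
    · exact aux_reach k v w (hv w)
    · exact (aux_reach k v _ (hv (ends k e).1)).trans (aux_adj1 k e b).reachable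

/-- Potential function giving the lower bound for distances to old vertices. -/
noncomputable def potV (k : ℕ) (y : DVert k) : DVert (k + 1) → ℕ
  | Sum.inl z => 2 * (diamondGraph k).dist z y
  | Sum.inr (e, _) =>
      1 + 2 * min ((diamondGraph k).dist (ends k e).1 y) ((diamondGraph k).dist (ends k e).2 y)

theorem aux_pot (k : ℕ) (y : DVert k) (u v : DVert (k + 1))
    (h : (diamondGraph (k + 1)).Adj u v) :
    potV k y u ≤ potV k y v + 1 ∧ potV k y v ≤ potV k y u + 1 := by
  have hd : ∀ e, (diamondGraph k).dist (ends k e).1 y ≤ (diamondGraph k).dist (ends k e).2 y + 1 ∧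
      (diamondGraph k).dist (ends k e).2 y ≤ (diamondGraph k).dist (ends k e).1 y + 1 := by
    intro e
    have ha := aux_adj_ends k e
    have h1 := SimpleGraph.dist_eq_one_iff_adj.2 ha
    have h2 := SimpleGraph.dist_eq_one_iff_adj.2 ha.symm
    have h3 := (aux_conn k).dist_triangle (u := (ends k e).1) (v := (ends k e).2) (w := y)
    have h4 := (aux_conn k).dist_triangle (u := (ends k e).2) (v := (ends k e).1) (w := y)
    omega
  refine aux_adj_succ k (fun u v => potV k y u ≤ potV k y v + 1 ∧ potV k y v ≤ potV k y u + 1)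
    (fun _ _ h => ⟨h.2, h.1⟩) ?_ ?_ u v h
  · intro e b
    have := hd e
    simp only [potV, oldV, newV]
    omega
  · intro e b
    have := hd e
    simp only [potV, oldV, newV]
    omega

theorem aux_walk (k : ℕ) (y : DVert k) (u v : DVert (k + 1))
    (w : (diamondGraph (k + 1)).Walk u v) : potV k y u ≤ potV k y v + w.length := by
  induction w with
  | nil => simp
  | cons hadj _ ih =>
    have := (aux_pot k y _ _ hadj).1
    rw [SimpleGraph.Walk.length_cons]
    omega

theorem aux_dist_old (k : ℕ) (x y : DVert k) :
    2 * (diamondGraph k).dist x y ≤ (diamondGraph (k + 1)).dist (oldV x) (oldV y) := by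
  obtain ⟨w, hw⟩ := (aux_conn (k + 1)).exists_walk_length_eq_dist (oldV x) (oldV y)
  have := aux_walk k y _ _ w
  rw [hw] at this
  simpa [potV, oldV] using this

theorem aux_dist_new (k : ℕ) (e : DEdge k) :
    2 ≤ (diamondGraph (k + 1)).dist (newV e false) (newV e true) := by
  refine (aux_conn (k + 1)).one_lt_dist_of_ne_of_not_adj ?_ ?_
  · intro h
    have := Sum.inr_injective h
    simp at this
  · intro h
    refine aux_adj_succ k (fun u v => ¬ (u.isRight = true ∧ v.isRight = true))
      (fun _ _ h h' => h ⟨h'.2, h'.1⟩) ?_ ?_ _ _ h ⟨rfl, rfl⟩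
    · rintro e b ⟨h, _⟩
      exact Bool.noConfusion h
    · rintro e b ⟨h, _⟩
      exact Bool.noConfusion h

theorem aux_card : ∀ k, Fintype.card (DEdge k) = 4 ^ k
  | 0 => rfl
  | k + 1 => by
    have h : Fintype.card (DEdge (k + 1)) = Fintype.card (DEdge k × Fin 4) := rfl
    rw [h, Fintype.card_prod, aux_card k, Fintype.card_fin, pow_succ]

theorem aux_main (p : ℝ) (hp : 2 ≤ p) : ∀ (k : ℕ) (c : ℝ) (_ : 0 ≤ c)
    (f : DVert k → lp (fun _ : ℕ => ℝ) (ENNReal.ofReal p))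
    (_ : ∀ x y : DVert k, c * ((diamondGraph k).dist x y : ℝ) ≤ ‖f x - f y‖),
    ((k : ℝ) + 1) * 4 ^ k * c ^ p ≤ ∑ e : DEdge k, ‖f (ends k e).1 - f (ends k e).2‖ ^ p
  | 0, c, hc, f, hf => by
    have h0 : ∑ e : DEdge 0, ‖f (ends 0 e).1 - f (ends 0 e).2‖ ^ p =
        ‖f (ends 0 ()).1 - f (ends 0 ()).2‖ ^ p :=
      Fintype.sum_unique (ι := Unit) (fun e => ‖f (ends 0 e).1 - f (ends 0 e).2‖ ^ p)
    rw [h0]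
    have h1 := hf (ends 0 ()).1 (ends 0 ()).2
    rw [SimpleGraph.dist_eq_one_iff_adj.2 (aux_adj_ends 0 ())] at h1
    have h2 := Real.rpow_le_rpow hc (by simpa using h1) (by linarith : 0 ≤ p)
    simpa using h2
  | k + 1, c, hc, f, hf => by
    have hp0 : 0 ≤ p := by linarith
    have ih := aux_main p hp k (c * 2) (by positivity) (fun v => f (oldV v)) (by
      intro x y
      refine le_trans ?_ (hf (oldV x) (oldV y))
      rw [mul_assoc]
      refine mul_le_mul_of_nonneg_left ?_ hc
      exact_mod_cast aux_dist_old k x y)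
    have hs : ∑ e : DEdge (k + 1), ‖f (ends (k + 1) e).1 - f (ends (k + 1) e).2‖ ^ p =
        ∑ e : DEdge k, (‖f (oldV (ends k e).1) - f (newV e false)‖ ^ p
          + ‖f (newV e false) - f (oldV (ends k e).2)‖ ^ p
          + ‖f (oldV (ends k e).2) - f (newV e true)‖ ^ p
          + ‖f (newV e true) - f (oldV (ends k e).1)‖ ^ p) := by
      refine (Fintype.sum_prod_type (α₁ := DEdge k) (α₂ := Fin 4)
        (fun e => ‖f (ends (k + 1) e).1 - f (ends (k + 1) e).2‖ ^ p)).trans ?_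
      refine Finset.sum_congr rfl fun e _ => ?_
      rw [Fin.sum_univ_four]
      rfl
    have hq : ∑ e : DEdge k, (‖f (oldV (ends k e).1) - f (oldV (ends k e).2)‖ ^ p + (c * 2) ^ p) ≤
        2 ^ (p - 2) * ∑ e : DEdge (k + 1), ‖f (ends (k + 1) e).1 - f (ends (k + 1) e).2‖ ^ p := by
      rw [hs, Finset.mul_sum]
      refine Finset.sum_le_sum fun e _ => ?_
      refine le_trans ?_ (aux_quad_lp p hp (f (oldV (ends k e).1)) (f (newV e false))
        (f (oldV (ends k e).2)) (f (newV e true)))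
      refine add_le_add le_rfl (Real.rpow_le_rpow (by positivity) ?_ hp0)
      refine le_trans ?_ (hf _ _)
      refine mul_le_mul_of_nonneg_left ?_ hc
      exact_mod_cast aux_dist_new k e
    rw [Finset.sum_add_distrib, Finset.sum_const, Finset.card_univ, aux_card, nsmul_eq_mul] at hq
    have e2 : (c * 2) ^ p = 2 ^ (p - 2) * (4 * c ^ p) := by
      rw [Real.mul_rpow hc (by norm_num), Real.rpow_sub (by norm_num)]
      norm_num
      ring
    have hpos : (0 : ℝ) < 2 ^ (p - 2) := by positivity
    refine le_of_mul_le_mul_left ?_ hpos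
    refine le_trans ?_ hq
    refine le_trans (le_of_eq ?_) (add_le_add ih le_rfl)
    rw [e2]
    push_cast
    ring

/-- Lower bound for embedding the diamond graph `𝒟_k` into `ℓ_p`, `p ≥ 2`: every
non-contractive embedding with expansion `ρ` satisfies `ρ ≥ ((k+1)/2^{p-2})^{1/p}`;
in particular every embedding of `𝒟_k` into `ℓ_p` has distortion `Ω(k^{1/p})`. -/
theorem diamond_lower_bound (p : ℝ) (hp : 2 ≤ p) (k : ℕ) (hk : 1 ≤ k)
    (f : DVert k → lp (fun _ : ℕ => ℝ) (ENNReal.ofReal p)) (ρ : ℝ) (hρ : 1 ≤ ρ)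
    (hlow : ∀ x y : DVert k, ((diamondGraph k).dist x y : ℝ) ≤ ‖f x - f y‖)
    (hup : ∀ x y : DVert k, ‖f x - f y‖ ≤ ρ * ((diamondGraph k).dist x y : ℝ)) :
    (((k : ℝ) + 1) / 2 ^ (p - 2)) ^ (1 / p) ≤ ρ := by
  have hp0 : 0 < p := by linarith
  have h1 := aux_main p hp k 1 (by norm_num) f (by simpa using hlow)
  have h2 : ∑ e : DEdge k, ‖f (ends k e).1 - f (ends k e).2‖ ^ p ≤ ∑ _e : DEdge k, ρ ^ p := by
    refine Finset.sum_le_sum fun e _ => ?_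
    refine Real.rpow_le_rpow (le_trans (Nat.cast_nonneg _) (hlow _ _)) ?_ hp0.le
    have := hup (ends k e).1 (ends k e).2
    rw [SimpleGraph.dist_eq_one_iff_adj.2 (aux_adj_ends k e)] at this
    simpa using this
  rw [Finset.sum_const, Finset.card_univ, aux_card, nsmul_eq_mul] at h2
  have h3 : (k : ℝ) + 1 ≤ ρ ^ p := by
    have h4 : (0 : ℝ) < 4 ^ k := by positivity
    refine le_of_mul_le_mul_left ?_ h4
    rw [Real.one_rpow] at h1
    push_cast at h2
    linarith
  have h5 : (1 : ℝ) ≤ 2 ^ (p - 2) := Real.one_le_rpow (by norm_num) (by linarith)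
  have h6 : ((k : ℝ) + 1) / 2 ^ (p - 2) ≤ ρ ^ p :=
    (div_le_self (by positivity) h5).trans h3
  calc (((k : ℝ) + 1) / 2 ^ (p - 2)) ^ (1 / p) ≤ (ρ ^ p) ^ (1 / p) :=
        Real.rpow_le_rpow (by positivity) h6 (by positivity)
    _ = ρ := by
        rw [← Real.rpow_mul (by linarith), mul_one_div_cancel hp0.ne', Real.rpow_one]
end

section
/- (Lipschitz bound for the scale weights.) Let (V,d) be a metric space and b : V → ℝ a 1-Lipschitz function with b(v) ≥ 1/2 for all v ∈ V. Then for all u, v ∈ V and every t ∈ ℕ, |p_t(v) − p_t(u)|·2^t ≤ 8·d(u,v). -/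
/-- Lipschitz bound for the scale weights: if `b : V → ℝ` is `1`-Lipschitz with
`b(v) ≥ 1/2`, `t_v` is the unique natural with `2^{t_v} ≤ 2b(v) < 2^{t_v+1}`,
`λ_v = (2b(v) - 2^{t_v})/2^{t_v}`, and `p_t(v)` equals `1 - λ_v` at `t = t_v`,
`λ_v` at `t = t_v + 1` and `0` otherwise, then
`|p_t(v) - p_t(u)|·2^t ≤ 8·d(u,v)` for all `u, v, t`. -/
theorem scale_weight_lipschitz {V : Type*} [MetricSpace V] (b : V → ℝ)
    (hLip : ∀ u v : V, |b v - b u| ≤ dist u v) (hb : ∀ v : V, (1 : ℝ) / 2 ≤ b v)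
    (tv : V → ℕ)
    (htv : ∀ v : V, (2 : ℝ) ^ (tv v) ≤ 2 * b v ∧ 2 * b v < 2 ^ (tv v + 1))
    (lam : V → ℝ) (hlam : ∀ v : V, lam v = (2 * b v - 2 ^ (tv v)) / 2 ^ (tv v))
    (pw : ℕ → V → ℝ)
    (hpw : ∀ (t : ℕ) (v : V), pw t v =
      if t = tv v then 1 - lam v else if t = tv v + 1 then lam v else 0) :
    ∀ (u v : V) (t : ℕ), |pw t v - pw t u| * 2 ^ t ≤ 8 * dist u v := by
  intro u v t
  have hT : (0 : ℝ) < 2 ^ t := by positivity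
  have key : ∀ w : V, pw t w * 2 ^ t
      = max 0 (min (2 * 2 ^ t - 2 * b w) (2 * (2 * b w) - 2 ^ t)) := by
    intro w
    obtain ⟨h1, h2⟩ := htv w
    rw [hpw, hlam]
    have hS : (0 : ℝ) < 2 ^ (tv w) := by positivity
    rw [pow_succ] at h2
    by_cases e1 : t = tv w
    · rw [if_pos e1, e1, min_eq_left (by linarith), max_eq_right (by linarith)]
      field_simp
      ring
    · rw [if_neg e1]
      by_cases e2 : t = tv w + 1
      · rw [if_pos e2, e2, pow_succ, min_eq_right (by linarith), max_eq_right (by linarith)]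
        field_simp
      · rw [if_neg e2, zero_mul, eq_comm]
        apply max_eq_left
        rcases Nat.lt_or_ge t (tv w) with h | h
        · have h3 : (2 : ℝ) ^ (t + 1) ≤ 2 ^ (tv w) :=
            pow_le_pow_right₀ (by norm_num) (by omega)
          rw [pow_succ] at h3
          exact (min_le_left _ _).trans (by linarith)
        · have h3 : (2 : ℝ) ^ (tv w + 2) ≤ 2 ^ t :=
            pow_le_pow_right₀ (by norm_num) (by omega)
          rw [pow_add] at h3
          exact (min_le_right _ _).trans (by linarith)
  have hd := hLip u v
  rw [← abs_of_pos hT, ← abs_mul, sub_mul, key, key]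
  have h0 : (0 : ℝ) ≤ dist u v := dist_nonneg
  refine (abs_max_sub_max_le_max _ _ _ _).trans (max_le (by simpa using h0) ?_)
  refine (abs_min_sub_min_le_max _ _ _ _).trans (max_le ?_ ?_)
  all_goals
    rw [abs_le] at hd ⊢
    constructor <;> linarith [hd.1, hd.2]
end
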